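/- arXiv:0811.0103 — 2 statements merged into one kernel-verified Lean document; each statement's English description precedes it below -/
import Mathlib

section
/- Fix finite nonempty sets A₀, A₁ ⊂ ℕ with n' := max A₀ ≥ 1, m' := max A₁ ≥ 1, gcd of the elements of A₀ ∪ A₁ equal to 1, and such that 0 ∉ A₀ and 0 ∉ A₁ (neither P₀ nor P₁ has a constant term). Let a₀₁ = min A₀ and a₁₁ = min A₁. Then for generic coefficients, the Newton polygon N(φ) of every irreducible φ ∈ ℂ[x,y] with φ(P₀(t), P₁(t)) = 0 in ℂ[t] equals the convex hull of the four points (a₁₁, 0), (m', 0), (0, n'), (0, a₀₁). -/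
open Polynomial

/-- The univariate polynomial with support `S` and coefficient vector `c`. -/
noncomputable def polyOfCoeffs (S : Finset ℕ) (c : {s // s ∈ S} → ℂ) : Polynomial ℂ :=
  ∑ s ∈ S.attach, Polynomial.C (c s) * Polynomial.X ^ (s : ℕ)

/-- The Newton polygon of a bivariate polynomial: the convex hull in `ℝ²` of its support. -/
noncomputable def newtonPolygon (φ : MvPolynomial (Fin 2) ℂ) : Set (ℝ × ℝ) :=
  convexHull ℝ ((fun d : Fin 2 →₀ ℕ => ((d 0 : ℝ), (d 1 : ℝ))) '' ↑φ.support)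

/-- `φ(P₀(t), P₁(t)) = 0` in `ℂ[t]`, where `P₀, P₁` have supports `A 0, A 1`
and coefficient vector `c`. -/
def vanishesPoly (A : Fin 2 → Finset ℕ)
    (c : (Σ i : Fin 2, {s // s ∈ A i}) → ℂ) (φ : MvPolynomial (Fin 2) ℂ) : Prop :=
  MvPolynomial.aeval
    ![polyOfCoeffs (A 0) (fun s => c ⟨0, s⟩),
      polyOfCoeffs (A 1) (fun s => c ⟨1, s⟩)] φ = 0

/-!
The curve `x = P(t)`, `y = Q(t)` has the implicit equation `r = Res_t(P - x, Q - y)`. Let `N`, `M`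
be the degrees and `a`, `b` the orders at `0` of `P` and `Q`. Weighting rows and columns of the
Sylvester matrix shows that every monomial `x^i y^j` of `r` satisfies `N i + M j ≤ N M` and
`a b ≤ a i + b j`, so the Newton polygon of `r` lies in the quadrilateral. By the Poisson formula
the roots of `r(x, ·)` are the values of `Q` on the fibre `P = x`; hence `r(0, ·)` contains the
monomial `y^N`, and also `y^a` as soon as `t = 0` is the only common zero of `P` and `Q`.
Exchanging `P` and `Q` gives the two vertices on the other axis.

By the Nullstellensatz `r` is, up to a unit, a power of any irreducible `φ` vanishing on the curve.
If some `t₀` is a simple root of `P - P(t₀)` and the only parameter of its point on the curve, then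
`r(P(t₀), ·)` has a simple root at `Q(t₀)`, so that the power is the first one.

Both conditions, the latter at `t₀ = 1`, are coprimality statements about polynomials in `t` whose
coefficients depend polynomially on those of `P` and `Q`. They are therefore the nonvanishing of a
resultant and hold generically as soon as they hold once. For the first take monomials. For the
second choose first `P` and then `Q`: a parameter `x ≠ 1` with the same image as `1` for all choices
would satisfy `x ^ s = 1` for every exponent `s`, which the gcd condition excludes.
-/

section WeightFiltration

/-- The decreasing filtration of `R[x_i : i ∈ σ]` by weight: level `k` consists of the polynomials
all of whose monomials have weight at least `k`, where `x_i` has weight `w i`. Since negative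
weights are allowed it encodes lower as well as upper bounds on supports. -/
noncomputable def weightFiltration {σ M : Type*} (R : Type*) [CommSemiring R] [AddCommMonoid M]
    [LE M] (w : σ → M) (k : M) : Submodule R (MvPolynomial σ R) :=
  MvPolynomial.restrictSupport R {d | k ≤ Finsupp.weight w d}

variable {σ R M : Type*} [CommSemiring R] [AddCommMonoid M] [PartialOrder M]

theorem mem_weightFiltration {w : σ → M} {k : M} {f : MvPolynomial σ R} :
    f ∈ weightFiltration R w k ↔ ∀ d ∈ f.support, k ≤ Finsupp.weight w d :=
  Iff.rfl

theorem weightFiltration_antitone (w : σ → M) : Antitone (weightFiltration R w) := fun _ _ hkl =>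
  MvPolynomial.restrictSupport_mono R fun _ hd => hkl.trans hd

theorem monomial_mem_weightFiltration (w : σ → M) (d : σ →₀ ℕ) (z : R) :
    MvPolynomial.monomial d z ∈ weightFiltration R w (Finsupp.weight w d) :=
  (MvPolynomial.monomial_mem_restrictSupport R).2 (Or.inl le_rfl)

theorem C_mem_weightFiltration (w : σ → M) (z : R) :
    MvPolynomial.C z ∈ weightFiltration R w 0 := by
  simpa using monomial_mem_weightFiltration w 0 z

theorem X_mem_weightFiltration (w : σ → M) (i : σ) :
    MvPolynomial.X i ∈ weightFiltration R w (w i) := by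
  rw [← one_nsmul (w i), ← Finsupp.weight_single]
  exact monomial_mem_weightFiltration w (Finsupp.single i 1) 1

instance [IsOrderedAddMonoid M] (w : σ → M) :
    SetLike.GradedMonoid (weightFiltration R w) where
  one_mem := C_mem_weightFiltration w 1
  mul_mem k l f g hf hg := by
    have hfg := Submodule.mul_mem_mul hf hg
    rw [weightFiltration, weightFiltration, ← MvPolynomial.restrictSupport_add] at hfg
    refine MvPolynomial.restrictSupport_mono R ?_ hfg
    rintro _ ⟨d, hd, e, he, rfl⟩
    simpa using add_le_add hd he

end WeightFiltration

section GradedDeterminants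

variable {ι S T : Type*} [AddCommGroup ι] [CommRing S] [SetLike T S] [AddSubgroupClass T S]
  (F : ι → T) [SetLike.GradedMonoid F]

theorem det_mem_graded {n : Type*} [Fintype n] [DecidableEq n] (A : Matrix n n S) (r s : n → ι)
    (h : ∀ i j, A i j ∈ F (r j - s i)) : A.det ∈ F (∑ j, r j - ∑ i, s i) := by
  rw [Matrix.det_apply]
  refine sum_mem fun σ _ => ?_
  have hprod := SetLike.prod_mem_graded F (fun j => r j - s (σ j)) (fun j => A (σ j) j)
    (F := Finset.univ) fun j _ => h (σ j) j
  rw [Finset.sum_sub_distrib, Equiv.sum_comp σ s] at hprod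
  rw [Units.smul_def]
  exact zsmul_mem hprod _

theorem resultant_mem_graded (f g : S[X]) (m n : ℕ) (rg rf s : ℕ → ι)
    (hg : ∀ j k, g.coeff k ∈ F (rg j - s (j + k)))
    (hf : ∀ j k, f.coeff k ∈ F (rf j - s (j + k))) :
    resultant f g m n ∈ F (∑ j ∈ Finset.range m, rg j + ∑ j ∈ Finset.range n, rf j -
      ∑ i ∈ Finset.range (m + n), s i) := by
  have hdet := det_mem_graded F (sylvester f g m n)
    (fun j => j.addCases (fun j => rg j) (fun j => rf j)) (fun i => s i) fun i j => by
      induction j using Fin.addCases with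
      | left j =>
        simp only [sylvester, Matrix.of_apply, Fin.addCases_left]
        split_ifs with hij
        · simpa [Nat.add_sub_cancel' hij.1] using hg j (i - j)
        · exact zero_mem _
      | right j =>
        simp only [sylvester, Matrix.of_apply, Fin.addCases_right]
        split_ifs with hij
        · simpa [Nat.add_sub_cancel' hij.1] using hf j (i - j)
        · exact zero_mem _
  simpa [Fin.sum_univ_add, Finset.sum_range, resultant] using hdet

end GradedDeterminants

section ImplicitResultant

/-- The implicit equation `Res_t(P(t) - x, Q(t) - y)` of the curve `x = P(t)`, `y = Q(t)`, where
`x` and `y` are the variables `0` and `1`. -/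
noncomputable def implicitResultant {R : Type*} [CommRing R] (P Q : R[X]) :
    MvPolynomial (Fin 2) R :=
  resultant (P.map MvPolynomial.C - C (MvPolynomial.X 0))
    (Q.map MvPolynomial.C - C (MvPolynomial.X 1)) P.natDegree Q.natDegree

variable {R : Type*} [CommRing R]

theorem coeff_map_C_sub_C_X_mem_weightFiltration {σ : Type*} {w : σ → ℤ} {κ : ℤ} {i : σ}
    {P : R[X]} {k : ℕ} (hcoeff : P.coeff k ≠ 0 → κ ≤ 0) (hconst : k = 0 → κ ≤ w i) :
    (P.map MvPolynomial.C - C (MvPolynomial.X i)).coeff k ∈ weightFiltration R w κ := by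
  rw [coeff_sub, coeff_map, coeff_C]
  refine sub_mem ?_ ?_
  · by_cases hk : P.coeff k = 0
    · simp [hk]
    · exact weightFiltration_antitone w (hcoeff hk) (C_mem_weightFiltration w _)
  · split_ifs with hk
    · exact weightFiltration_antitone w (hconst hk) (X_mem_weightFiltration w i)
    · exact zero_mem _

theorem implicitResultant_mem_weightFiltration (P Q : R[X]) (w : Fin 2 → ℤ) (rQ rP s : ℕ → ℤ)
    (hQ : ∀ j k, Q.coeff k ≠ 0 → rQ j ≤ s (j + k)) (hQ₀ : ∀ j, rQ j ≤ s j + w 1)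
    (hP : ∀ j k, P.coeff k ≠ 0 → rP j ≤ s (j + k)) (hP₀ : ∀ j, rP j ≤ s j + w 0) :
    implicitResultant P Q ∈ weightFiltration R w
      (∑ j ∈ Finset.range P.natDegree, rQ j + ∑ j ∈ Finset.range Q.natDegree, rP j -
        ∑ i ∈ Finset.range (P.natDegree + Q.natDegree), s i) := by
  refine resultant_mem_graded (weightFiltration R w) _ _ _ _ rQ rP s (fun j k => ?_) fun j k => ?_
  · refine coeff_map_C_sub_C_X_mem_weightFiltration (fun hk => sub_nonpos.2 (hQ j k hk)) ?_
    rintro rfl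
    exact sub_le_iff_le_add'.2 (hQ₀ j)
  · refine coeff_map_C_sub_C_X_mem_weightFiltration (fun hk => sub_nonpos.2 (hP j k hk)) ?_
    rintro rfl
    exact sub_le_iff_le_add'.2 (hP₀ j)

theorem weight_fin_two (w : Fin 2 → ℤ) (d : Fin 2 →₀ ℕ) :
    Finsupp.weight w d = d 0 * w 0 + d 1 * w 1 := by
  simp [Finsupp.weight_apply, Finsupp.sum_fintype]

theorem natDegree_mul_add_natDegree_mul_le_of_mem_support_implicitResultant {P Q : R[X]}
    {d : Fin 2 →₀ ℕ} (hd : d ∈ (implicitResultant P Q).support) :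
    P.natDegree * d 0 + Q.natDegree * d 1 ≤ P.natDegree * Q.natDegree := by
  have hmem := implicitResultant_mem_weightFiltration P Q ![-P.natDegree, -Q.natDegree]
    (fun j => -Q.natDegree - j) (fun j => -P.natDegree - j) (fun i => -i)
    (fun j k hk => by have := le_natDegree_of_ne_zero hk; push_cast; lia)
    (fun j => by simp [add_comm, sub_eq_add_neg])
    (fun j k hk => by have := le_natDegree_of_ne_zero hk; push_cast; lia)
    (fun j => by simp [add_comm, sub_eq_add_neg])
  have hle := mem_weightFiltration.1 hmem d hd
  simp only [Finset.sum_range_add, Finset.sum_sub_distrib, Finset.sum_neg_distrib,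
    Finset.sum_add_distrib, Finset.sum_const, Finset.card_range, weight_fin_two, Nat.cast_add,
    Matrix.cons_val_zero, Matrix.cons_val_one, nsmul_eq_mul] at hle
  zify
  linarith

theorem two_mul_sum_range_min {n a : ℕ} (h : a ≤ n) :
    2 * ∑ i ∈ Finset.range n, (min i a : ℤ) = 2 * n * a - a * (a + 1) := by
  induction n, h using Nat.le_induction with
  | base =>
    have hmin : ∑ i ∈ Finset.range a, (min i a : ℤ) = ∑ i ∈ Finset.range a, (i : ℤ) :=
      Finset.sum_congr rfl fun i hi => by have := Finset.mem_range.1 hi; lia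
    have hgauss : ∀ n : ℕ, 2 * ∑ i ∈ Finset.range n, (i : ℤ) = n * n - n := fun n => by
      induction n with
      | zero => simp
      | succ n ih => rw [Finset.sum_range_succ, mul_add, ih]; push_cast; ring
    rw [hmin, hgauss]
    ring
  | succ n hn ih =>
    rw [Finset.sum_range_succ, mul_add, ih, min_eq_right (by exact_mod_cast hn)]
    push_cast
    ring

theorem natTrailingDegree_mul_le_of_mem_support_implicitResultant {P Q : R[X]}
    {d : Fin 2 →₀ ℕ} (hd : d ∈ (implicitResultant P Q).support) :
    P.natTrailingDegree * Q.natTrailingDegree ≤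
      P.natTrailingDegree * d 0 + Q.natTrailingDegree * d 1 := by
  set a := P.natTrailingDegree
  set b := Q.natTrailingDegree
  have ha : a ≤ P.natDegree := natTrailingDegree_le_natDegree P
  have hb : b ≤ Q.natDegree := natTrailingDegree_le_natDegree Q
  -- The untruncated weights `b + j`, `a + j`, `i` would only give the lower bound
  -- `a * b - (P.natDegree - a) * (Q.natDegree - b)`.
  have hmem := implicitResultant_mem_weightFiltration P Q ![a, b]
    (fun j => b + min j a) (fun j => a + min j b) (fun i => min i (a + b : ℕ))
    (fun j k hk => by have : b ≤ k := natTrailingDegree_le_of_ne_zero hk; lia)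
    (fun j => by simp only [Matrix.cons_val_one, Matrix.cons_val_fin_one]; lia)
    (fun j k hk => by have : a ≤ k := natTrailingDegree_le_of_ne_zero hk; lia)
    (fun j => by simp only [Matrix.cons_val_zero]; lia)
  have hle := mem_weightFiltration.1 hmem d hd
  have hsumP := two_mul_sum_range_min ha
  have hsumQ := two_mul_sum_range_min hb
  have hsum := two_mul_sum_range_min (Nat.add_le_add ha hb)
  simp only [Finset.sum_add_distrib, Finset.sum_const, Finset.card_range, weight_fin_two,
    Matrix.cons_val_zero, Matrix.cons_val_one, nsmul_eq_mul] at hle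
  push_cast at hsum hle
  zify
  linarith

theorem algHom_implicitResultant {B : Type*} [CommRing B] [Algebra R B] (P Q : R[X])
    (f : MvPolynomial (Fin 2) R →ₐ[R] B) :
    f (implicitResultant P Q) =
      resultant (P.map (algebraMap R B) - C (f (MvPolynomial.X 0)))
        (Q.map (algebraMap R B) - C (f (MvPolynomial.X 1))) P.natDegree Q.natDegree := by
  have hC : (f : MvPolynomial (Fin 2) R →+* B).comp MvPolynomial.C = algebraMap R B := by
    ext z
    simp [← MvPolynomial.algebraMap_eq]
  have hres := resultant_map_map (P.map MvPolynomial.C - C (MvPolynomial.X 0))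
    (Q.map MvPolynomial.C - C (MvPolynomial.X 1)) P.natDegree Q.natDegree
    (f : MvPolynomial (Fin 2) R →+* B)
  rw [Polynomial.map_sub, Polynomial.map_sub, Polynomial.map_map, Polynomial.map_map, hC,
    map_C, map_C] at hres
  exact hres.symm

theorem rename_swap_implicitResultant (P Q : R[X]) :
    MvPolynomial.rename (Equiv.swap 0 1) (implicitResultant P Q) =
      (-1) ^ (P.natDegree * Q.natDegree) * implicitResultant Q P := by
  rw [algHom_implicitResultant, resultant_comm, MvPolynomial.rename_X, MvPolynomial.rename_X,
    Equiv.swap_apply_left, Equiv.swap_apply_right, MvPolynomial.algebraMap_eq, implicitResultant]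

theorem coeff_single_zero_implicitResultant (P Q : R[X]) (k : ℕ) :
    (implicitResultant P Q).coeff (Finsupp.single 0 k) =
      (-1) ^ (P.natDegree * Q.natDegree) *
        (implicitResultant Q P).coeff (Finsupp.single 1 k) := by
  have hsign : ((-1) ^ (P.natDegree * Q.natDegree) : MvPolynomial (Fin 2) R) =
      MvPolynomial.C ((-1) ^ (P.natDegree * Q.natDegree)) := by simp
  rw [← MvPolynomial.coeff_rename_mapDomain _ (Equiv.swap (0 : Fin 2) 1).injective,
    rename_swap_implicitResultant, hsign, MvPolynomial.coeff_C_mul, Finsupp.mapDomain_single,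
    Equiv.swap_apply_left]

end ImplicitResultant

section VerticalSlice

variable {R : Type*} [CommRing R]

/-- Restriction of a bivariate polynomial to the vertical line through `x`, as a polynomial in the
second variable. -/
noncomputable def verticalSlice (x : R) : MvPolynomial (Fin 2) R →ₐ[R] R[X] :=
  MvPolynomial.aeval ![C x, X]

theorem eval_aeval_fin_two (P Q : R[X]) (f : MvPolynomial (Fin 2) R) (t : R) :
    (MvPolynomial.aeval ![P, Q] f).eval t = MvPolynomial.aeval ![P.eval t, Q.eval t] f := by
  rw [← coe_aeval_eq_eval, ← AlgHom.comp_apply, MvPolynomial.comp_aeval]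
  congr 2
  funext i
  fin_cases i <;> rfl

theorem eval_verticalSlice (x y : R) (f : MvPolynomial (Fin 2) R) :
    (verticalSlice x f).eval y = MvPolynomial.aeval ![x, y] f := by
  rw [verticalSlice, eval_aeval_fin_two, eval_C, eval_X]

theorem coeff_verticalSlice_zero (f : MvPolynomial (Fin 2) R) (k : ℕ) :
    (verticalSlice 0 f).coeff k = f.coeff (Finsupp.single 1 k) := by
  classical
  induction f using MvPolynomial.induction_on' with
  | monomial d z =>
    have hd : d = Finsupp.single 1 k ↔ d 0 = 0 ∧ d 1 = k := by
      simp [Finsupp.ext_iff, Fin.forall_fin_two]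
    rw [verticalSlice, MvPolynomial.aeval_monomial, MvPolynomial.coeff_monomial,
      Finsupp.prod_fintype _ _ (by simp), Fin.prod_univ_two]
    by_cases h0 : d 0 = 0 <;> simp [hd, h0, coeff_X_pow, eq_comm (a := k)]
  | add p q hp hq => rw [map_add, coeff_add, hp, hq, MvPolynomial.coeff_add]

end VerticalSlice

section AlgebraicallyClosed

variable {K : Type*} [Field K] [IsAlgClosed K] {P Q : K[X]}

theorem associated_verticalSlice_implicitResultant {x : K} (hx : P - C x ≠ 0) :
    Associated (verticalSlice x (implicitResultant P Q))
      (((P - C x).roots.map Q.eval).map fun y => X - C y).prod := by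
  have hdeg : (P.map C - C (C x)).natDegree = P.natDegree := by
    rw [natDegree_sub_C, natDegree_map_eq_of_injective C_injective]
  have hmap : P.map C - C (C x) = (P - C x).map C := by simp
  have hsplits := IsAlgClosed.splits (P - C x)
  have hres := resultant_eq_prod_eval (P.map C - C (C x)) (Q.map C - C X) Q.natDegree
    (natDegree_sub_C.le.trans natDegree_map_le) (hmap ▸ hsplits.map C)
  rw [hdeg, hmap, leadingCoeff_map_of_injective C_injective, hsplits.roots_map] at hres
  have hneg : (P - C x).roots.map (fun τ => (Q.map C - C X).eval (C τ)) =
      (((P - C x).roots.map Q.eval).map fun y => X - C y).map Neg.neg := by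
    simp [Multiset.map_map, eval_map_apply]
  rw [Multiset.map_map, Function.comp_def, hneg, Multiset.prod_map_neg] at hres
  have hslice : verticalSlice x (implicitResultant P Q) =
      (P.map C - C (C x)).resultant (Q.map C - C X) P.natDegree Q.natDegree := by
    rw [algHom_implicitResultant, verticalSlice, MvPolynomial.aeval_X, MvPolynomial.aeval_X]
    rfl
  rw [hslice, hmap, hres, ← mul_assoc]
  refine associated_unit_mul_left _ _ (.mul (.pow _ (isUnit_C.2 ?_)) (isUnit_neg_one.pow _))
  exact (leadingCoeff_ne_zero.2 hx).isUnit

theorem verticalSlice_implicitResultant_ne_zero {x : K} (hx : P - C x ≠ 0) :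
    verticalSlice x (implicitResultant P Q) ≠ 0 :=
  (associated_verticalSlice_implicitResultant hx).ne_zero_iff.2
    (monic_multisetProd_X_sub_C _).ne_zero

theorem roots_verticalSlice_implicitResultant {x : K} (hx : P - C x ≠ 0) :
    (verticalSlice x (implicitResultant P Q)).roots = (P - C x).roots.map Q.eval := by
  rw [(associated_verticalSlice_implicitResultant hx).roots_eq, roots_multiset_prod_X_sub_C]

theorem natDegree_verticalSlice_implicitResultant {x : K} (hx : P - C x ≠ 0) :
    (verticalSlice x (implicitResultant P Q)).natDegree = P.natDegree := by
  rw [← IsAlgClosed.card_roots_eq_natDegree, roots_verticalSlice_implicitResultant hx,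
    Multiset.card_map, IsAlgClosed.card_roots_eq_natDegree, natDegree_sub_C]

theorem rootMultiplicity_verticalSlice_implicitResultant {t₀ : K} (hP : P - C (P.eval t₀) ≠ 0)
    (ht₀ : ∀ τ, P.eval τ = P.eval t₀ → Q.eval τ = Q.eval t₀ → τ = t₀) :
    (verticalSlice (P.eval t₀) (implicitResultant P Q)).rootMultiplicity (Q.eval t₀) =
      (P - C (P.eval t₀)).rootMultiplicity t₀ := by
  classical
  rw [← count_roots, ← count_roots, roots_verticalSlice_implicitResultant hP,
    Multiset.count_map, Multiset.count_eq_card_filter_eq]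
  refine congrArg _ (Multiset.filter_congr fun τ hτ => ?_)
  have hPτ : P.eval τ = P.eval t₀ := by simpa [sub_eq_zero] using (mem_roots'.1 hτ).2
  exact ⟨fun hQτ => (ht₀ τ hPτ hQτ.symm).symm, fun h => h ▸ rfl⟩

theorem exists_eval_eq_of_aeval_implicitResultant_eq_zero (hP : P.natDegree ≠ 0) {x y : K}
    (h : MvPolynomial.aeval ![x, y] (implicitResultant P Q) = 0) :
    ∃ t, P.eval t = x ∧ Q.eval t = y := by
  have hx : P - C x ≠ 0 := fun h0 => hP (by rw [sub_eq_zero.1 h0, natDegree_C])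
  have hy := (mem_roots (verticalSlice_implicitResultant_ne_zero hx)).2
    ((eval_verticalSlice x y (implicitResultant P Q)).trans h)
  rw [roots_verticalSlice_implicitResultant hx, Multiset.mem_map] at hy
  obtain ⟨t, ht, hty⟩ := hy
  exact ⟨t, by simpa [sub_eq_zero] using (mem_roots'.1 ht).2, hty⟩

theorem implicitResultant_dvd_pow (hP : P.natDegree ≠ 0) {φ : MvPolynomial (Fin 2) K}
    (h : MvPolynomial.aeval ![P, Q] φ = 0) : ∃ n, implicitResultant P Q ∣ φ ^ n := by
  have hrad : φ ∈ (Ideal.span {implicitResultant P Q}).radical := by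
    rw [← MvPolynomial.vanishingIdeal_zeroLocus_eq_radical (K := K),
      MvPolynomial.mem_vanishingIdeal_iff]
    intro v hv
    have hv0 := MvPolynomial.mem_zeroLocus_iff.1 hv _ (Ideal.mem_span_singleton_self _)
    have hv2 : v = ![v 0, v 1] := by
      funext i
      fin_cases i <;> rfl
    rw [hv2] at hv0 ⊢
    obtain ⟨t, hPt, hQt⟩ := exists_eval_eq_of_aeval_implicitResultant_eq_zero hP hv0
    rw [← hPt, ← hQt, ← eval_aeval_fin_two, h, eval_zero]
  obtain ⟨n, hn⟩ := hrad
  exact ⟨n, Ideal.mem_span_singleton.1 hn⟩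

theorem associated_implicitResultant (hP : P.natDegree ≠ 0) {t₀ : K}
    (ht₀ : ∀ τ, P.eval τ = P.eval t₀ → Q.eval τ = Q.eval t₀ → τ = t₀)
    (hP' : P.derivative.eval t₀ ≠ 0) {φ : MvPolynomial (Fin 2) K} (hφ : Irreducible φ)
    (h : MvPolynomial.aeval ![P, Q] φ = 0) : Associated (implicitResultant P Q) φ := by
  classical
  obtain ⟨n, hn⟩ := implicitResultant_dvd_pow hP h
  obtain ⟨k, -, hk⟩ := (dvd_prime_pow hφ.prime n).1 hn
  have hne : P - C (P.eval t₀) ≠ 0 := fun h0 => hP (by rw [sub_eq_zero.1 h0, natDegree_C])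
  have hmult : (P - C (P.eval t₀)).rootMultiplicity t₀ = 1 := by
    have hpos := (rootMultiplicity_pos hne).2 (show IsRoot _ t₀ by simp)
    have hle := (one_lt_rootMultiplicity_iff_isRoot hne).not.2 fun h' => hP' (by simpa using h'.2)
    lia
  rw [← rootMultiplicity_verticalSlice_implicitResultant hne ht₀, ← count_roots,
    (hk.map (verticalSlice (P.eval t₀))).roots_eq, map_pow, roots_pow,
    Multiset.count_nsmul] at hmult
  rwa [Nat.eq_one_of_mul_eq_one_right hmult, pow_one] at hk

theorem coeff_single_one_natDegree_implicitResultant_ne_zero (hP : P ≠ 0) :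
    (implicitResultant P Q).coeff (Finsupp.single 1 P.natDegree) ≠ 0 := by
  have hx : P - C 0 ≠ 0 := by simpa
  rw [← coeff_verticalSlice_zero, ← natDegree_verticalSlice_implicitResultant hx]
  exact leadingCoeff_ne_zero.2 (verticalSlice_implicitResultant_ne_zero hx)

theorem coeff_single_one_natTrailingDegree_implicitResultant_ne_zero (hP : P ≠ 0)
    (hP₀ : P.eval 0 = 0) (hQ₀ : Q.eval 0 = 0) (h₀ : ∀ τ, P.eval τ = 0 → Q.eval τ = 0 → τ = 0) :
    (implicitResultant P Q).coeff (Finsupp.single 1 P.natTrailingDegree) ≠ 0 := by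
  have hx : P - C 0 ≠ 0 := by simpa
  have hmult := rootMultiplicity_verticalSlice_implicitResultant (P := P) (Q := Q) (t₀ := 0)
    (by rwa [hP₀]) (by rwa [hP₀, hQ₀])
  rw [hP₀, hQ₀, C_0, sub_zero, rootMultiplicity_eq_natTrailingDegree',
    rootMultiplicity_eq_natTrailingDegree'] at hmult
  rw [← coeff_verticalSlice_zero, ← hmult]
  exact trailingCoeff_nonzero_iff_nonzero.2 (verticalSlice_implicitResultant_ne_zero hx)

end AlgebraicallyClosed

section NewtonPolygon

theorem support_eq_of_associated {σ R : Type*} [CommRing R] [IsReduced R]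
    {φ ψ : MvPolynomial σ R} (h : Associated φ ψ) : φ.support = ψ.support := by
  obtain ⟨u, rfl⟩ := h
  obtain ⟨r, hr, hu⟩ := MvPolynomial.isUnit_iff_eq_C_of_isReduced.1 u.isUnit
  ext d
  rw [hu, mul_comm, MvPolynomial.mem_support_iff, MvPolynomial.mem_support_iff,
    MvPolynomial.coeff_C_mul, Ne, Ne, hr.mul_right_eq_zero]

theorem newtonPolygon_eq_of_associated {φ ψ : MvPolynomial (Fin 2) ℂ} (h : Associated φ ψ) :
    newtonPolygon φ = newtonPolygon ψ := by
  rw [newtonPolygon, support_eq_of_associated h, newtonPolygon]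

theorem mem_newtonPolygon_of_coeff_ne_zero {φ : MvPolynomial (Fin 2) ℂ} {d : Fin 2 →₀ ℕ}
    (h : φ.coeff d ≠ 0) : ((d 0 : ℝ), (d 1 : ℝ)) ∈ newtonPolygon φ :=
  subset_convexHull ℝ _ ⟨d, MvPolynomial.mem_support_iff.2 h, rfl⟩

theorem smul_mem_segment_axes {α β i j : ℝ} (hα : 0 ≤ α) (hβ : 0 ≤ β) (hi : 0 ≤ i) (hj : 0 ≤ j)
    (h : 0 < α * i + β * j) :
    (α * β / (α * i + β * j)) • (i, j) ∈ segment ℝ (β, (0 : ℝ)) ((0 : ℝ), α) := by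
  refine ⟨α * i / (α * i + β * j), β * j / (α * i + β * j), by positivity, by positivity, ?_, ?_⟩
  · rw [← add_div, div_self h.ne']
  · ext <;> simp <;> ring

theorem mem_of_smul_mem_of_convex {E : Type*} [AddCommGroup E] [Module ℝ E] {s : Set E}
    (hs : Convex ℝ s) {p : E} {a b : ℝ} (ha : a • p ∈ s) (hb : b • p ∈ s) (ha₁ : a ≤ 1)
    (hb₁ : 1 ≤ b) : p ∈ s := by
  have hconv : Convex ℝ ((fun r : ℝ => r • p) ⁻¹' s) :=
    hs.linear_preimage (LinearMap.toSpanSingleton ℝ E p)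
  simpa using hconv.ordConnected.out ha hb ⟨ha₁, hb₁⟩

theorem mem_convexHull_quadrilateral {a b N M i j : ℝ} (ha : 0 < a) (hb : 0 < b) (hN : 0 < N)
    (hM : 0 < M) (hi : 0 ≤ i) (hj : 0 ≤ j) (hlower : a * b ≤ a * i + b * j)
    (hupper : N * i + M * j ≤ N * M) :
    (i, j) ∈ convexHull ℝ {(b, (0 : ℝ)), (M, (0 : ℝ)), ((0 : ℝ), N), ((0 : ℝ), a)} := by
  have hlower_pos : 0 < a * i + b * j := (mul_pos ha hb).trans_le hlower
  have hupper_pos : 0 < N * i + M * j := by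
    rcases hi.eq_or_lt with rfl | hi
    · have hj : 0 < j := by simpa [hb] using hlower_pos
      positivity
    · positivity
  have hconv := convex_convexHull ℝ {(b, (0 : ℝ)), (M, (0 : ℝ)), ((0 : ℝ), N), ((0 : ℝ), a)}
  refine mem_of_smul_mem_of_convex hconv
    (hconv.segment_subset ?_ ?_ (smul_mem_segment_axes ha.le hb.le hi hj hlower_pos))
    (hconv.segment_subset ?_ ?_ (smul_mem_segment_axes hN.le hM.le hi hj hupper_pos))
    (div_le_one_of_le₀ hlower hlower_pos.le) ((one_le_div hupper_pos).2 hupper) <;>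
  exact subset_convexHull ℝ _ (by simp)

variable {P Q : ℂ[X]}

theorem newtonPolygon_implicitResultant_subset (hP₀ : 0 < P.natTrailingDegree)
    (hQ₀ : 0 < Q.natTrailingDegree) :
    newtonPolygon (implicitResultant P Q) ⊆ convexHull ℝ
      {((Q.natTrailingDegree : ℝ), (0 : ℝ)), ((Q.natDegree : ℝ), (0 : ℝ)),
        ((0 : ℝ), (P.natDegree : ℝ)), ((0 : ℝ), (P.natTrailingDegree : ℝ))} := by
  refine convexHull_min ?_ (convex_convexHull ℝ _)
  rintro _ ⟨d, hd, rfl⟩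
  have hN := hP₀.trans_le (natTrailingDegree_le_natDegree P)
  have hM := hQ₀.trans_le (natTrailingDegree_le_natDegree Q)
  apply mem_convexHull_quadrilateral <;> norm_cast <;> try positivity
  · exact natTrailingDegree_mul_le_of_mem_support_implicitResultant hd
  · exact natDegree_mul_add_natDegree_mul_le_of_mem_support_implicitResultant hd

theorem convexHull_subset_newtonPolygon_implicitResultant (hP₀ : 0 < P.natTrailingDegree)
    (hQ₀ : 0 < Q.natTrailingDegree) (h₀ : ∀ τ, P.eval τ = 0 → Q.eval τ = 0 → τ = 0) :
    convexHull ℝ {((Q.natTrailingDegree : ℝ), (0 : ℝ)), ((Q.natDegree : ℝ), (0 : ℝ)),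
        ((0 : ℝ), (P.natDegree : ℝ)), ((0 : ℝ), (P.natTrailingDegree : ℝ))} ⊆
      newtonPolygon (implicitResultant P Q) := by
  have hP : P ≠ 0 := by rintro rfl; simp at hP₀
  have hQ : Q ≠ 0 := by rintro rfl; simp at hQ₀
  have hP0 : P.eval 0 = 0 := by
    rw [← coeff_zero_eq_eval_zero, coeff_eq_zero_of_lt_natTrailingDegree hP₀]
  have hQ0 : Q.eval 0 = 0 := by
    rw [← coeff_zero_eq_eval_zero, coeff_eq_zero_of_lt_natTrailingDegree hQ₀]
  have hy : ∀ k, (implicitResultant P Q).coeff (Finsupp.single 1 k) ≠ 0 →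
      ((0 : ℝ), (k : ℝ)) ∈ newtonPolygon (implicitResultant P Q) := fun k hk => by
    simpa using mem_newtonPolygon_of_coeff_ne_zero hk
  have hx : ∀ k, (implicitResultant Q P).coeff (Finsupp.single 1 k) ≠ 0 →
      ((k : ℝ), (0 : ℝ)) ∈ newtonPolygon (implicitResultant P Q) := fun k hk => by
    have hk' : (implicitResultant P Q).coeff (Finsupp.single 0 k) ≠ 0 := by
      simpa [coeff_single_zero_implicitResultant] using hk
    simpa using mem_newtonPolygon_of_coeff_ne_zero hk'
  refine convexHull_min ?_ (convex_convexHull ℝ _)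
  rintro _ (rfl | rfl | rfl | rfl)
  · exact hx _ (coeff_single_one_natTrailingDegree_implicitResultant_ne_zero hQ hQ0 hP0
      fun τ hQτ hPτ => h₀ τ hPτ hQτ)
  · exact hx _ (coeff_single_one_natDegree_implicitResultant_ne_zero hQ)
  · exact hy _ (coeff_single_one_natDegree_implicitResultant_ne_zero hP)
  · exact hy _ (coeff_single_one_natTrailingDegree_implicitResultant_ne_zero hP hP0 hQ0 h₀)

theorem newtonPolygon_eq_convexHull_of_irreducible (hP₀ : 0 < P.natTrailingDegree)
    (hQ₀ : 0 < Q.natTrailingDegree) (h₀ : ∀ τ, P.eval τ = 0 → Q.eval τ = 0 → τ = 0) {t₀ : ℂ}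
    (ht₀ : ∀ τ, P.eval τ = P.eval t₀ → Q.eval τ = Q.eval t₀ → τ = t₀)
    (hP' : P.derivative.eval t₀ ≠ 0) {φ : MvPolynomial (Fin 2) ℂ} (hφ : Irreducible φ)
    (h : MvPolynomial.aeval ![P, Q] φ = 0) :
    newtonPolygon φ = convexHull ℝ
      {((Q.natTrailingDegree : ℝ), (0 : ℝ)), ((Q.natDegree : ℝ), (0 : ℝ)),
        ((0 : ℝ), (P.natDegree : ℝ)), ((0 : ℝ), (P.natTrailingDegree : ℝ))} := by
  have hP : P.natDegree ≠ 0 := (hP₀.trans_le (natTrailingDegree_le_natDegree P)).ne'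
  rw [← newtonPolygon_eq_of_associated (associated_implicitResultant hP ht₀ hP' hφ h)]
  exact (newtonPolygon_implicitResultant_subset hP₀ hQ₀).antisymm
    (convexHull_subset_newtonPolygon_implicitResultant hP₀ hQ₀ h₀)

end NewtonPolygon

section Genericity

variable {σ R : Type*} [CommRing R] [IsDomain R]

/-- The filter of generic coefficient vectors: a property holds eventually along it if it holds off
the zero set of some nonzero polynomial in the coefficients. -/
def zariskiGeneric (σ R : Type*) [CommRing R] [IsDomain R] : Filter (σ → R) where
  sets := {s | ∃ G : MvPolynomial σ R, G ≠ 0 ∧ ∀ c, MvPolynomial.eval c G ≠ 0 → c ∈ s}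
  univ_sets := ⟨1, one_ne_zero, fun _ _ => trivial⟩
  sets_of_superset := fun ⟨G, hG, h⟩ hst => ⟨G, hG, fun c hc => hst (h c hc)⟩
  inter_sets := fun ⟨G, hG, hs⟩ ⟨H, hH, ht⟩ => ⟨G * H, mul_ne_zero hG hH, fun c hc => by
    rw [map_mul] at hc
    exact ⟨hs c (left_ne_zero_of_mul hc), ht c (right_ne_zero_of_mul hc)⟩⟩

instance [Infinite R] : (zariskiGeneric σ R).NeBot := by
  refine ⟨fun h => ?_⟩
  obtain ⟨G, hG, hempty⟩ := Filter.empty_mem_iff_bot.2 h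
  exact hG (MvPolynomial.funext fun c => by simpa using not_not.1 (hempty c))

theorem eventually_eval_ne_zero {G : MvPolynomial σ R} {c₀ : σ → R}
    (h : MvPolynomial.eval c₀ G ≠ 0) : ∀ᶠ c in zariskiGeneric σ R, MvPolynomial.eval c G ≠ 0 :=
  ⟨G, ne_zero_of_map h, fun _ => id⟩

theorem eventually_apply_ne_zero (i : σ) : ∀ᶠ c in zariskiGeneric σ R, c i ≠ 0 := by
  simpa using eventually_eval_ne_zero (G := MvPolynomial.X i) (c₀ := (1 : σ → R)) (by simp)

theorem isCoprime_map_iff_resultant_ne_zero {S K : Type*} [CommRing S] [Field K] {p q : S[X]}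
    {f : S →+* K} (hp : f p.leadingCoeff ≠ 0) :
    IsCoprime (p.map f) (q.map f) ↔ f (resultant p q) ≠ 0 := by
  have hp0 : p.map f ≠ 0 := fun h => hp (by rw [← coeff_natDegree, ← coeff_map, h, coeff_zero])
  obtain ⟨k, hk⟩ := Nat.exists_eq_add_of_le (natDegree_map_le (f := f) (p := q))
  rw [← resultant_map_map, hk, resultant_add_right_deg _ _ _ _ _ le_rfl, coeff_map,
    coeff_natDegree, ← natDegree_map_of_leadingCoeff_ne_zero f hp,
    mul_ne_zero_iff_left (pow_ne_zero _ hp), Ne, resultant_eq_zero_iff]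
  simp [hp0]

theorem eventually_isCoprime_map {K : Type*} [Field K] {p q : (MvPolynomial σ K)[X]} {c₀ : σ → K}
    (hp : MvPolynomial.eval c₀ p.leadingCoeff ≠ 0)
    (h : IsCoprime (p.map (MvPolynomial.eval c₀)) (q.map (MvPolynomial.eval c₀))) :
    ∀ᶠ c in zariskiGeneric σ K,
      IsCoprime (p.map (MvPolynomial.eval c)) (q.map (MvPolynomial.eval c)) := by
  filter_upwards [eventually_eval_ne_zero hp,
    eventually_eval_ne_zero ((isCoprime_map_iff_resultant_ne_zero hp).1 h)] with c hpc hc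
  exact (isCoprime_map_iff_resultant_ne_zero hpc).2 hc

end Genericity

section SparseFamily

variable {ι R : Type*} [CommSemiring R] {A : ι → Finset ℕ} {i : ι}

/-- The `i`-th member of the family of univariate polynomials with supports `A i` and joint
coefficient vector `c`. Over `ℂ` it is `polyOfCoeffs (A i) fun s => c ⟨i, s⟩` by definition, but
arbitrary coefficients also allow the universal family, where `c = MvPolynomial.X`. -/
noncomputable def sparseFamily (A : ι → Finset ℕ) (c : (Σ i, {s // s ∈ A i}) → R) (i : ι) : R[X] :=
  ∑ s ∈ (A i).attach, C (c ⟨i, s⟩) * X ^ (s : ℕ)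

theorem coeff_sparseFamily (c : (Σ i, {s // s ∈ A i}) → R) (s : {s // s ∈ A i}) :
    (sparseFamily A c i).coeff s = c ⟨i, s⟩ := by
  classical
  simp [sparseFamily, coeff_X_pow]

theorem coeff_sparseFamily_of_notMem (c : (Σ i, {s // s ∈ A i}) → R) {k : ℕ} (hk : k ∉ A i) :
    (sparseFamily A c i).coeff k = 0 := by
  rw [sparseFamily, finsetSum_coeff]
  refine Finset.sum_eq_zero fun s _ => ?_
  rw [coeff_C_mul, coeff_X_pow, if_neg (fun h : k = s => hk (h ▸ s.2)), mul_zero]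

theorem map_sparseFamily {S : Type*} [CommSemiring S] (f : R →+* S)
    (c : (Σ i, {s // s ∈ A i}) → R) :
    (sparseFamily A c i).map f = sparseFamily A (fun x => f (c x)) i := by
  simp [sparseFamily, Polynomial.map_sum]

theorem map_eval_sparseFamily_X (c : (Σ i, {s // s ∈ A i}) → R) :
    (sparseFamily A MvPolynomial.X i).map (MvPolynomial.eval c) = sparseFamily A c i := by
  simp [map_sparseFamily]

theorem sparseFamily_single [DecidableEq ι] (s : {s // s ∈ A i}) :
    sparseFamily A (Pi.single ⟨i, s⟩ (1 : R)) i = X ^ (s : ℕ) := by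
  classical
  rw [sparseFamily, Finset.sum_eq_single_of_mem s (Finset.mem_attach _ _)]
  · simp
  · intro t _ ht
    simp [ht]

theorem natDegree_sparseFamily_eq_max' (hA : (A i).Nonempty) {c : (Σ i, {s // s ∈ A i}) → R}
    (hc : c ⟨i, _, (A i).max'_mem hA⟩ ≠ 0) :
    (sparseFamily A c i).natDegree = (A i).max' hA := by
  refine natDegree_eq_of_le_of_coeff_ne_zero (natDegree_le_iff_coeff_eq_zero.2 fun k hk => ?_)
    ((coeff_sparseFamily c _).trans_ne hc)
  exact coeff_sparseFamily_of_notMem c fun hkA => hk.not_ge ((A i).le_max' k hkA)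

theorem leadingCoeff_sparseFamily (hA : (A i).Nonempty) {c : (Σ i, {s // s ∈ A i}) → R}
    (hc : c ⟨i, _, (A i).max'_mem hA⟩ ≠ 0) :
    (sparseFamily A c i).leadingCoeff = c ⟨i, _, (A i).max'_mem hA⟩ := by
  rw [leadingCoeff, natDegree_sparseFamily_eq_max' hA hc]
  exact coeff_sparseFamily c ⟨_, (A i).max'_mem hA⟩

theorem natTrailingDegree_sparseFamily_eq_min' (hA : (A i).Nonempty)
    {c : (Σ i, {s // s ∈ A i}) → R} (hc : c ⟨i, _, (A i).min'_mem hA⟩ ≠ 0) :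
    (sparseFamily A c i).natTrailingDegree = (A i).min' hA := by
  have hcoeff := (coeff_sparseFamily c _).trans_ne hc
  refine (natTrailingDegree_le_of_ne_zero hcoeff).antisymm
    (le_natTrailingDegree (fun h0 => hcoeff (by rw [h0, coeff_zero])) fun k hk => ?_)
  exact coeff_sparseFamily_of_notMem c fun hkA => hk.not_ge ((A i).min'_le k hkA)

theorem exists_sparseFamily_eq_sparseFamily {j : ι} (hij : i ≠ j)
    (c d : (Σ i, {s // s ∈ A i}) → R) :
    ∃ e, sparseFamily A e i = sparseFamily A c i ∧ sparseFamily A e j = sparseFamily A d j := by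
  classical
  exact ⟨fun x => if x.1 = i then c x else d x, by simp [sparseFamily],
    by simp [sparseFamily, hij.symm]⟩

end SparseFamily

section CommonRoots

variable {R : Type*} [CommRing R] [IsDomain R]

theorem eval_divByMonic_X_sub_C_eq_zero_iff {P : R[X]} {a x : R} :
    (P /ₘ (X - C a)).eval x = 0 ↔ P.eval x = P.eval a ∧ (x = a → P.derivative.eval a = 0) := by
  have hmul := congrArg (eval x) (X_sub_C_mul_divByMonic_eq_sub_modByMonic P a)
  have hderiv := congrArg (eval a)
    (divByMonic_add_X_sub_C_mul_derivative_divByMonic_eq_derivative P a)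
  simp only [modByMonic_X_sub_C_eq_C_eval, eval_mul, eval_sub, eval_add, eval_X, eval_C, sub_self,
    zero_mul, add_zero] at hmul hderiv
  rw [← sub_eq_zero (a := P.eval x), ← hmul, ← hderiv]
  rcases eq_or_ne x a with rfl | hx
  · simp
  · simp [hx, sub_eq_zero]

theorem eq_zero_of_isCoprime_divByMonic_X_pow {P Q : R[X]}
    (h : IsCoprime P (Q /ₘ X ^ Q.natTrailingDegree)) {x : R} (hP : P.eval x = 0)
    (hQ : Q.eval x = 0) : x = 0 := by
  have hdvd : X ^ Q.natTrailingDegree ∣ Q :=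
    X_pow_dvd_iff.2 fun _ hd => coeff_eq_zero_of_lt_natTrailingDegree hd
  have hmul := modByMonic_add_div Q (X ^ Q.natTrailingDegree)
  rw [(modByMonic_eq_zero_iff_dvd (monic_X_pow _)).2 hdvd, zero_add] at hmul
  rw [← hmul, eval_mul, eval_pow, eval_X, mul_eq_zero] at hQ
  refine hQ.elim eq_zero_of_pow_eq_zero fun hQ' => ?_
  exact absurd (h.map (evalRingHom x)).ne_zero_or_ne_zero (by simp [hP, hQ'])

theorem eq_of_isCoprime_divByMonic_X_sub_C {P Q : R[X]} {a x : R}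
    (h : IsCoprime (P /ₘ (X - C a)) (Q - C (Q.eval a))) (hP : P.eval x = P.eval a)
    (hQ : Q.eval x = Q.eval a) : x = a := by
  by_contra hx
  have hroot := eval_divByMonic_X_sub_C_eq_zero_iff.2 ⟨hP, fun h => absurd h hx⟩
  exact absurd (h.map (evalRingHom x)).ne_zero_or_ne_zero (by simp [hroot, hQ])

theorem eval_derivative_ne_zero_of_isCoprime_divByMonic_X_sub_C {P Q : R[X]} {a : R}
    (h : IsCoprime (P /ₘ (X - C a)) (Q - C (Q.eval a))) : P.derivative.eval a ≠ 0 := fun hP' => by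
  have hroot := eval_divByMonic_X_sub_C_eq_zero_iff.2 ⟨rfl, fun _ => hP'⟩
  exact absurd (h.map (evalRingHom a)).ne_zero_or_ne_zero (by simp [hroot])

end CommonRoots

section GenericFamily

variable {ι K : Type*} [Field K] {A : ι → Finset ℕ} {i j : ι}

theorem eval_leadingCoeff_sparseFamily_X (hA : (A i).Nonempty) (c : (Σ i, {s // s ∈ A i}) → K) :
    MvPolynomial.eval c (sparseFamily A (MvPolynomial.X (R := K)) i).leadingCoeff =
      c ⟨i, _, (A i).max'_mem hA⟩ := by
  rw [leadingCoeff_sparseFamily hA (MvPolynomial.X_ne_zero _), MvPolynomial.eval_X]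

theorem eventually_linearMap_sparseFamily_ne_zero (ℓ : K[X] →ₗ[K] K) {s : ℕ} (hs : s ∈ A i)
    (h : ℓ (X ^ s) ≠ 0) :
    ∀ᶠ c in zariskiGeneric (Σ i, {s // s ∈ A i}) K, ℓ (sparseFamily A c i) ≠ 0 := by
  classical
  have heval : ∀ c : (Σ i, {s // s ∈ A i}) → K, MvPolynomial.eval c
      (∑ s ∈ (A i).attach, MvPolynomial.X ⟨i, s⟩ * MvPolynomial.C (ℓ (X ^ (s : ℕ)))) =
        ℓ (sparseFamily A c i) := fun c => by
    simp [sparseFamily, ← smul_eq_C_mul]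
  have hsingle := heval (Pi.single ⟨i, s, hs⟩ 1)
  rw [sparseFamily_single] at hsingle
  simpa only [heval] using eventually_eval_ne_zero (hsingle.trans_ne h)

theorem eventually_eval_sparseFamily_ne {x y : K} {s : ℕ} (hs : s ∈ A i) (h : x ^ s ≠ y ^ s) :
    ∀ᶠ c in zariskiGeneric (Σ i, {s // s ∈ A i}) K,
      (sparseFamily A c i).eval x ≠ (sparseFamily A c i).eval y := by
  simpa [sub_eq_zero] using eventually_linearMap_sparseFamily_ne_zero (leval x - leval y) hs
    (by simpa [sub_eq_zero] using h)

theorem eventually_eval_one_derivative_sparseFamily_ne_zero {s : ℕ} (hs : s ∈ A i)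
    (h : (s : K) ≠ 0) : ∀ᶠ c in zariskiGeneric (Σ i, {s // s ∈ A i}) K,
      (sparseFamily A c i).derivative.eval 1 ≠ 0 := by
  simpa using eventually_linearMap_sparseFamily_ne_zero (leval 1 ∘ₗ derivative) hs
    (by simpa [derivative_X_pow] using h)

theorem eventually_isCoprime_divByMonic_X_pow (hij : i ≠ j) (hi : (A i).Nonempty)
    (hj : (A j).Nonempty) :
    ∀ᶠ c in zariskiGeneric (Σ i, {s // s ∈ A i}) K,
      IsCoprime (sparseFamily A c i) (sparseFamily A c j /ₘ X ^ (A j).min' hj) := by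
  classical
  have hmap : ∀ c : (Σ i, {s // s ∈ A i}) → K,
      (sparseFamily A MvPolynomial.X j /ₘ X ^ (A j).min' hj).map (MvPolynomial.eval c) =
        sparseFamily A c j /ₘ X ^ (A j).min' hj := fun c => by
    rw [map_divByMonic _ (monic_X_pow _), map_eval_sparseFamily_X, Polynomial.map_pow, map_X]
  have hself : (X ^ (A j).min' hj : K[X]) /ₘ X ^ (A j).min' hj = 1 := by
    simpa using mul_divByMonic_cancel_left (1 : K[X]) (monic_X_pow ((A j).min' hj))
  obtain ⟨c₀, hP, hQ⟩ := exists_sparseFamily_eq_sparseFamily hij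
    (Pi.single ⟨i, _, (A i).max'_mem hi⟩ (1 : K)) (Pi.single ⟨j, _, (A j).min'_mem hj⟩ 1)
  rw [sparseFamily_single] at hP hQ
  have hcop := eventually_isCoprime_map (c₀ := c₀) (p := sparseFamily A MvPolynomial.X i)
    (q := sparseFamily A MvPolynomial.X j /ₘ X ^ (A j).min' hj)
    (by simp [eval_leadingCoeff_sparseFamily_X hi, ← coeff_sparseFamily, hP])
    (by rw [hmap, hQ, hself]; exact isCoprime_one_right)
  simpa only [hmap, map_eval_sparseFamily_X] using hcop

theorem isCoprime_iff_eval_ne_zero [IsAlgClosed K] {p q : K[X]} :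
    IsCoprime p q ↔ ∀ x, p.eval x = 0 → q.eval x ≠ 0 := by
  simp [isCoprime_iff_aeval_ne_zero_of_isAlgClosed K K, imp_iff_not_or]

theorem eq_one_of_forall_mem_pow_eq_one {M : Type*} [Monoid M] {S : Finset ℕ} (hS : S.gcd id = 1)
    {x : M} (hx : ∀ s ∈ S, x ^ s = 1) : x = 1 := by
  rw [← orderOf_eq_one_iff, ← Nat.dvd_one, ← hS]
  exact Finset.dvd_gcd fun s hs => orderOf_dvd_of_pow_eq_one (hx s hs)

theorem eventually_eval_ne_eval_one_of_forall_pow_eq_one (hj : (A j).Nonempty)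
    (hj₀ : (A j).max' hj ≠ 0) (hgcd : (A i ∪ A j).gcd id = 1) :
    ∀ᶠ c in zariskiGeneric (Σ i, {s // s ∈ A i}) K, ∀ x, (∀ s ∈ A j, x ^ s = 1) → x ≠ 1 →
      (sparseFamily A c i).eval x ≠ (sparseFamily A c i).eval 1 := by
  classical
  have hroots : ∀ x : K, (∀ s ∈ A j, x ^ s = 1) → x ∈ (nthRoots ((A j).max' hj) 1).toFinset :=
    fun x hx => by
      rw [Multiset.mem_toFinset, mem_nthRoots (Nat.pos_of_ne_zero hj₀)]
      exact hx _ ((A j).max'_mem hj)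
  suffices ∀ᶠ c in zariskiGeneric (Σ i, {s // s ∈ A i}) K,
      ∀ x ∈ (nthRoots ((A j).max' hj) (1 : K)).toFinset, (∀ s ∈ A j, x ^ s = 1) → x ≠ 1 →
        (sparseFamily A c i).eval x ≠ (sparseFamily A c i).eval 1 from
    this.mono fun c hc x hx => hc x (hroots x hx) hx
  refine (Filter.eventually_all_finset _).2 fun x _ => ?_
  simp only [Filter.eventually_imp_distrib_left]
  intro hx hx₁
  obtain ⟨s, hs, hxs⟩ : ∃ s ∈ A i, x ^ s ≠ 1 := by
    contrapose! hx₁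
    exact eq_one_of_forall_mem_pow_eq_one hgcd fun s hs =>
      (Finset.mem_union.1 hs).elim (hx₁ s) (hx s)
  exact eventually_eval_sparseFamily_ne hs (by rwa [one_pow])

theorem eventually_isCoprime_sub_C_eval_one [IsAlgClosed K] {P : K[X]}
    (hP' : P.derivative.eval 1 ≠ 0)
    (hP : ∀ x, (∀ s ∈ A j, x ^ s = 1) → x ≠ 1 → P.eval x ≠ P.eval 1) :
    ∀ᶠ c in zariskiGeneric (Σ i, {s // s ∈ A i}) K, IsCoprime (P /ₘ (X - C 1))
      (sparseFamily A c j - C ((sparseFamily A c j).eval 1)) := by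
  classical
  have hne : P /ₘ (X - C 1) ≠ 0 := fun h0 =>
    hP' ((eval_divByMonic_X_sub_C_eq_zero_iff (x := 1)).1 (by rw [h0, eval_zero]) |>.2 rfl)
  have hsep : ∀ᶠ c in zariskiGeneric (Σ i, {s // s ∈ A i}) K, ∀ x ∈ (P /ₘ (X - C 1)).roots.toFinset,
      (sparseFamily A c j).eval x ≠ (sparseFamily A c j).eval 1 := by
    refine (Filter.eventually_all_finset _).2 fun x hx => ?_
    obtain ⟨hPx, hx₁⟩ :=
      eval_divByMonic_X_sub_C_eq_zero_iff.1 ((mem_roots hne).1 (Multiset.mem_toFinset.1 hx))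
    obtain ⟨s, hs, hxs⟩ : ∃ s ∈ A j, x ^ s ≠ 1 := by
      by_contra! h
      exact hP x h (fun h₁ => hP' (hx₁ h₁)) hPx
    exact eventually_eval_sparseFamily_ne hs (by rwa [one_pow])
  filter_upwards [hsep] with c hc
  refine isCoprime_iff_eval_ne_zero.2 fun x hx => ?_
  rw [eval_sub, eval_C]
  exact sub_ne_zero.2 (hc x (Multiset.mem_toFinset.2 ((mem_roots hne).2 hx)))

theorem exists_isCoprime_divByMonic_X_sub_C [CharZero K] [IsAlgClosed K] (hij : i ≠ j)
    (hi : (A i).Nonempty) (hj : (A j).Nonempty) (hi₀ : (A i).max' hi ≠ 0) (hj₀ : (A j).max' hj ≠ 0)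
    (hgcd : (A i ∪ A j).gcd id = 1) : ∃ c : (Σ i, {s // s ∈ A i}) → K,
      c ⟨i, _, (A i).max'_mem hi⟩ ≠ 0 ∧ IsCoprime (sparseFamily A c i /ₘ (X - C 1))
        (sparseFamily A c j - C ((sparseFamily A c j).eval 1)) := by
  obtain ⟨c, hlead, hderiv, hsep⟩ := ((eventually_apply_ne_zero ⟨i, _, (A i).max'_mem hi⟩).and <|
    (eventually_eval_one_derivative_sparseFamily_ne_zero (K := K) ((A i).max'_mem hi)
      (Nat.cast_ne_zero.2 hi₀)).and <|
    eventually_eval_ne_eval_one_of_forall_pow_eq_one hj hj₀ hgcd).exists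
  obtain ⟨d, hd⟩ := (eventually_isCoprime_sub_C_eval_one hderiv hsep).exists
  obtain ⟨e, hei, hej⟩ := exists_sparseFamily_eq_sparseFamily hij c d
  refine ⟨e, ?_, by rwa [hei, hej]⟩
  rwa [← coeff_sparseFamily e, hei, coeff_sparseFamily]

theorem eventually_isCoprime_divByMonic_X_sub_C [CharZero K] [IsAlgClosed K] (hij : i ≠ j)
    (hi : (A i).Nonempty) (hj : (A j).Nonempty) (hi₀ : (A i).max' hi ≠ 0) (hj₀ : (A j).max' hj ≠ 0)
    (hgcd : (A i ∪ A j).gcd id = 1) : ∀ᶠ c in zariskiGeneric (Σ i, {s // s ∈ A i}) K,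
      IsCoprime (sparseFamily A c i /ₘ (X - C 1))
        (sparseFamily A c j - C ((sparseFamily A c j).eval 1)) := by
  set U : ι → (MvPolynomial (Σ i, {s // s ∈ A i}) K)[X] := sparseFamily A MvPolynomial.X
  have hmapi : ∀ c : (Σ i, {s // s ∈ A i}) → K, (U i /ₘ (X - C 1)).map (MvPolynomial.eval c) =
      sparseFamily A c i /ₘ (X - C 1) := fun c => by
    rw [map_divByMonic _ (monic_X_sub_C 1), map_eval_sparseFamily_X]
    simp
  have hmapj : ∀ c : (Σ i, {s // s ∈ A i}) → K, (U j - C ((U j).eval 1)).map (MvPolynomial.eval c) =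
      sparseFamily A c j - C ((sparseFamily A c j).eval 1) := fun c => by
    rw [Polynomial.map_sub, map_C, ← eval_map_apply, map_one, map_eval_sparseFamily_X]
  have hdeg : (U i).degree ≠ 0 := fun h => hi₀ <| by
    rw [← natDegree_sparseFamily_eq_max' hi (MvPolynomial.X_ne_zero (R := K) _)]
    exact natDegree_eq_of_degree_eq_some h
  obtain ⟨c₀, hlead, hcop⟩ := exists_isCoprime_divByMonic_X_sub_C hij hi hj hi₀ hj₀ hgcd (K := K)
  rw [← hmapi, ← hmapj] at hcop
  have hcop' := eventually_isCoprime_map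
    (by rwa [leadingCoeff_divByMonic_X_sub_C _ hdeg, eval_leadingCoeff_sparseFamily_X hi]) hcop
  simpa only [hmapi, hmapj] using hcop'

end GenericFamily

/-- Polynomial parameterizations, case without constant terms: the implicit Newton polygon
is the quadrilateral with vertices `(a₁₁,0)`, `(m',0)`, `(0,n')`, `(0,a₀₁)`. -/
theorem implicit_polygon_poly_quadrilateral (A : Fin 2 → Finset ℕ) (hne : ∀ i, (A i).Nonempty)
    (n' m' : ℕ) (hn' : n' = (A 0).max' (hne 0)) (hm' : m' = (A 1).max' (hne 1))
    (hn'1 : 1 ≤ n') (hm'1 : 1 ≤ m')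
    (hgcd : (A 0 ∪ A 1).gcd id = 1)
    (h00 : 0 ∉ A 0) (h01 : 0 ∉ A 1) :
    ∃ G : MvPolynomial (Σ i : Fin 2, {s // s ∈ A i}) ℂ, G ≠ 0 ∧
      ∀ c : (Σ i : Fin 2, {s // s ∈ A i}) → ℂ, MvPolynomial.eval c G ≠ 0 →
        ∀ φ : MvPolynomial (Fin 2) ℂ, Irreducible φ → vanishesPoly A c φ →
          newtonPolygon φ = convexHull ℝ
            {(((A 1).min' (hne 1) : ℝ), (0 : ℝ)),
             ((m' : ℝ), (0 : ℝ)),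
             ((0 : ℝ), (n' : ℝ)),
             ((0 : ℝ), ((A 0).min' (hne 0) : ℝ))} := by
  subst hn' hm'
  have hmin : ∀ i, 0 < (A i).min' (hne i) := by
    rw [Fin.forall_fin_two]
    exact ⟨Nat.pos_of_ne_zero fun h => h00 (h ▸ Finset.min'_mem _ _),
      Nat.pos_of_ne_zero fun h => h01 (h ▸ Finset.min'_mem _ _)⟩
  change ∀ᶠ c in zariskiGeneric _ ℂ, ∀ φ : MvPolynomial (Fin 2) ℂ, Irreducible φ →
    MvPolynomial.aeval ![sparseFamily A c 0, sparseFamily A c 1] φ = 0 → newtonPolygon φ = _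
  filter_upwards [eventually_isCoprime_divByMonic_X_pow zero_ne_one (hne 0) (hne 1),
    eventually_isCoprime_divByMonic_X_sub_C zero_ne_one (hne 0) (hne 1)
      (Nat.one_le_iff_ne_zero.1 hn'1) (Nat.one_le_iff_ne_zero.1 hm'1) hgcd,
    Filter.eventually_all.2 fun i => eventually_apply_ne_zero ⟨i, _, (A i).max'_mem (hne i)⟩,
    Filter.eventually_all.2 fun i => eventually_apply_ne_zero ⟨i, _, (A i).min'_mem (hne i)⟩]
    with c hcop₀ hcop₁ hmaxc hminc φ hφ h
  have hdeg := fun i => natDegree_sparseFamily_eq_max' (hne i) (hmaxc i)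
  have htdeg := fun i => natTrailingDegree_sparseFamily_eq_min' (hne i) (hminc i)
  rw [← htdeg 1] at hcop₀
  simpa only [hdeg, htdeg] using newtonPolygon_eq_convexHull_of_irreducible
    ((htdeg 0).symm ▸ hmin 0) ((htdeg 1).symm ▸ hmin 1)
    (fun _ => eq_zero_of_isCoprime_divByMonic_X_pow hcop₀)
    (fun _ => eq_of_isCoprime_divByMonic_X_sub_C hcop₁)
    (eval_derivative_ne_zero_of_isCoprime_divByMonic_X_sub_C hcop₁) hφ h
end

section
/- Fix finite nonempty sets SP₀, SQ₀, SP₁, SQ₁ ⊂ ℕ with 0 ∈ SP₀ ∪ SQ₀, 0 ∈ SP₁ ∪ SQ₁, gcd of the nonzero elements of SP₀ ∪ SQ₀ ∪ SP₁ ∪ SQ₁ equal to 1, and set a₀n = max(SP₀ ∪ SQ₀) ≥ 1 and a₁m = max(SP₁ ∪ SQ₁) ≥ 1. Suppose SQ₀ ⊆ SP₀. Then for generic coefficients the following holds for every irreducible φ ∈ ℂ[x,y] with φ(P₀/Q₀, P₁/Q₁) = 0 in ℂ(t): (i) if SQ₁ ⊆ SP₁, then φ has a nonzero constant term, i.e.,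 (0,0) ∈ supp(φ), so (0,0) is a vertex of the Newton polygon N(φ); (ii) if SQ₁ ⊄ SP₁, then both (0,0) and (0, a₀n) belong to supp(φ) and are vertices of N(φ). -/
open Polynomial

/-- The image of that polynomial in the field of rational functions `ℂ(t)`. -/
noncomputable def ratFuncOf (S : Finset ℕ) (c : {s // s ∈ S} → ℂ) : RatFunc ℂ :=
  algebraMap (Polynomial ℂ) (RatFunc ℂ) (polyOfCoeffs S c)

/-- `φ(P₀/Q₀, P₁/Q₁) = 0` in `ℂ(t)`, where `P₀, Q₀, P₁, Q₁` have supports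
`SS 0, SS 1, SS 2, SS 3` and coefficient vector `c`. -/
def vanishesDiff (SS : Fin 4 → Finset ℕ)
    (c : (Σ i : Fin 4, {s // s ∈ SS i}) → ℂ) (φ : MvPolynomial (Fin 2) ℂ) : Prop :=
  MvPolynomial.aeval
    ![ratFuncOf (SS 0) (fun s => c ⟨0, s⟩) / ratFuncOf (SS 1) (fun s => c ⟨1, s⟩),
      ratFuncOf (SS 2) (fun s => c ⟨2, s⟩) / ratFuncOf (SS 3) (fun s => c ⟨3, s⟩)] φ = 0

/-! Over the line `x = 0` a generic parameterization is as simple as possible: `P₀` has `a₀n`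
distinct zeros, and at these `y = P₁ / Q₁` takes distinct, finite and nonzero values. Since
`deg_y φ ≤ [ℂ(t) : ℂ(P₀ / Q₀)] = a₀n`, the polynomial `φ(0, y)` has exactly these values as its
roots. So it has degree `a₀n` and a nonzero constant term, and `(0, a₀n)` and `(0, 0)` are corners
of the bounding box of the support of `φ`.

The required position is the nonvanishing of a product of resultants, one of them essentially the
discriminant of `Res_t(P₀, Y Q₁ - P₁)`. The product is not identically zero: two zeros of `P₀` with
ratio `u` can be separated by some `P₁ / Q₁` unless `uᵏ = 1` for all exponents `k` of `P₁` and `Q₁`.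
For `P₀ = c + ∑ tᵏ` with generic `c` this forces `uᵏ = 1` for the exponents of `P₀` as well, hence
`u = 1` by the gcd condition. -/

namespace ImplicitHull

section NewtonPolygon

lemma mem_extremePoints_convexHull_of_subset {𝕜 E : Type*} [Semiring 𝕜] [PartialOrder 𝕜]
    [AddCommMonoid E] [Module 𝕜 E] {s C : Set E} {x : E} (hC : Convex 𝕜 C)
    (hsC : s ⊆ C) (hxs : x ∈ s) (hx : x ∈ Set.extremePoints 𝕜 C) :
    x ∈ Set.extremePoints 𝕜 (convexHull 𝕜 s) :=
  inter_extremePoints_subset_extremePoints_of_subset (convexHull_min hsC hC)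
    ⟨subset_convexHull 𝕜 s hxs, hx⟩

/-- The Newton polygon of a bivariate polynomial over an arbitrary coefficient ring;
over `ℂ` it unfolds to `newtonPolygon`. -/
noncomputable def supportHull {R : Type*} [CommSemiring R] (φ : MvPolynomial (Fin 2) R) :
    Set (ℝ × ℝ) :=
  convexHull ℝ ((fun d : Fin 2 →₀ ℕ ↦ ((d 0 : ℝ), (d 1 : ℝ))) '' ↑φ.support)

lemma mem_extremePoints_supportHull {R : Type*} [CommSemiring R] {φ : MvPolynomial (Fin 2) R}
    {d : Fin 2 →₀ ℕ} (hd : d ∈ φ.support) (hcorner : ∀ i, d i = 0 ∨ d i = φ.degreeOf i) :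
    ((d 0 : ℝ), (d 1 : ℝ)) ∈ Set.extremePoints ℝ (supportHull φ) := by
  refine mem_extremePoints_convexHull_of_subset
    (C := Set.Icc 0 (φ.degreeOf 0 : ℝ) ×ˢ Set.Icc 0 (φ.degreeOf 1 : ℝ))
    ((convex_Icc _ _).prod (convex_Icc _ _)) ?_ (Set.mem_image_of_mem _ hd) ?_
  · rintro _ ⟨e, he, rfl⟩
    have hle (i) : e i ≤ φ.degreeOf i := MvPolynomial.monomial_le_degreeOf i he
    simp [hle]
  · rw [extremePoints_prod, Set.extremePoints_Icc (Nat.cast_nonneg _),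
      Set.extremePoints_Icc (Nat.cast_nonneg _)]
    exact ⟨by simpa using hcorner 0, by simpa using hcorner 1⟩

end NewtonPolygon

section Specialization

variable {R A L : Type*} [CommRing R] [CommRing A] [Algebra R A] [Field L] [Algebra R L]

lemma liftAlgHom_mk'_eq_div {M : Submonoid A} {S : Type*} [CommRing S] [Algebra A S]
    [IsLocalization M S] [Algebra R S] [IsScalarTower R A S] {f : A →ₐ[R] L}
    (hf : ∀ y : M, IsUnit (f y)) (x : A) (y : M) :
    IsLocalization.liftAlgHom hf (IsLocalization.mk' S x y) = f x / f y := by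
  rw [eq_div_iff (hf y).ne_zero, mul_comm]
  exact ((IsLocalization.lift_mk'_spec hf x _ y).1 rfl).symm

open scoped nonZeroDivisors in
lemma aeval_div_eq_zero_of_specialization {F σ : Type*} [IsDomain A] [Field F] [Algebra A F]
    [IsFractionRing A F] [Algebra R F] [IsScalarTower R A F]
    (f : A →ₐ[R] L) {p q : σ → A} (hq : ∀ i, f (q i) ≠ 0)
    {φ : MvPolynomial σ R}
    (hφ : MvPolynomial.aeval (fun i ↦ algebraMap A F (p i) / algebraMap A F (q i)) φ = 0) :
    MvPolynomial.aeval (fun i ↦ f (p i) / f (q i)) φ = 0 := by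
  let M : Submonoid A := L⁰.comap f
  have hM : M ≤ A⁰ := fun x hx ↦ mem_nonZeroDivisors_of_ne_zero fun h ↦ by
    simp [M, h] at hx
  have hF (y : M) : IsUnit (IsScalarTower.toAlgHom R A F y) :=
    IsLocalization.map_units F (⟨y, hM y.2⟩ : A⁰)
  have hL (y : M) : IsUnit (f y) := (nonZeroDivisors.ne_zero y.2).isUnit
  let z (i : σ) : Localization M :=
    IsLocalization.mk' _ (p i) (⟨q i, mem_nonZeroDivisors_of_ne_zero (hq i)⟩ : M)
  have hinj : Function.Injective (IsLocalization.liftAlgHom hF : Localization M →ₐ[R] F) :=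
    (IsLocalization.lift_injective_iff hF).2 fun x y ↦
      (IsLocalization.injective (Localization M) hM).eq_iff.trans
        (IsFractionRing.injective A F).eq_iff.symm
  have hz : MvPolynomial.aeval z φ = 0 := hinj <| by
    rw [map_zero, MvPolynomial.comp_aeval_apply, ← hφ]
    exact congrArg (MvPolynomial.aeval · φ) (funext fun i ↦ liftAlgHom_mk'_eq_div hF _ _)
  simpa [z, MvPolynomial.comp_aeval_apply, liftAlgHom_mk'_eq_div] using
    congrArg (IsLocalization.liftAlgHom hL) hz

end Specialization

section DegreeBound

open IntermediateField

lemma natDegree_le_finrank_of_irreducible {A F E : Type*} [CommRing A] [IsDomain A]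
    [IsGCDMonoid A] [Field F] [Algebra A F] [IsFractionRing A F] [Field E] [Algebra F E]
    [Algebra A E] [IsScalarTower A F E] [FiniteDimensional F E] {Φ : A[X]} (hΦ : Irreducible Φ)
    {y : E} (hy : aeval y Φ = 0) : Φ.natDegree ≤ Module.finrank F E := by
  by_cases h0 : Φ.natDegree = 0
  · simp [h0]
  have hirr : Irreducible (Φ.map (algebraMap A F)) :=
    ((hΦ.isPrimitive h0).irreducible_iff_irreducible_map_fraction_map (K := F)).1 hΦ
  have hmin := minpoly.eq_of_irreducible hirr ((aeval_map_algebraMap F y Φ).trans hy)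
  have hdeg : (minpoly F y).natDegree = Φ.natDegree := by
    rw [← hmin, natDegree_mul_C (inv_ne_zero (leadingCoeff_ne_zero.2 hirr.ne_zero)),
      natDegree_map_eq_of_injective (IsFractionRing.injective A F)]
  exact hdeg ▸ minpoly.natDegree_le y

lemma eval₂_aeval_optionEquivLeft {R S τ : Type*} [CommSemiring R] [CommSemiring S] [Algebra R S]
    (w : τ → S) (y : S) (p : MvPolynomial (Option τ) R) :
    eval₂ (MvPolynomial.aeval w : MvPolynomial τ R →ₐ[R] S) y (MvPolynomial.optionEquivLeft R τ p) =
      MvPolynomial.aeval (Option.elim · y w) p := by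
  induction p using MvPolynomial.induction_on with
  | C r => simp
  | add p q hp hq => simp [eval₂_add, hp, hq]
  | mul_X p o hp => cases o <;> simp [eval₂_mul, hp]

lemma degreeOf_le_finrank {K E σ : Type*} [Field K] [Field E] [Algebra K E] {φ : MvPolynomial σ K}
    (hφ : Irreducible φ) (i : σ) {v : σ → E}
    (hv : AlgebraicIndependent K fun j : {j // j ≠ i} ↦ v j)
    [FiniteDimensional (adjoin K (Set.range fun j : {j // j ≠ i} ↦ v j)) E]
    (h : MvPolynomial.aeval v φ = 0) :
    φ.degreeOf i ≤ Module.finrank (adjoin K (Set.range fun j : {j // j ≠ i} ↦ v j)) E := by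
  classical
  let F := adjoin K (Set.range fun j : {j // j ≠ i} ↦ v j)
  let A := MvPolynomial {j // j ≠ i} K
  let _ : Algebra A F :=
    (hv.aevalEquivField.toRingHom.comp (algebraMap A (FractionRing A))).toAlgebra
  have : IsFractionRing A F := IsLocalization.isLocalization_of_algEquiv _
    (AlgEquiv.ofRingEquiv (f := hv.aevalEquivField.toRingEquiv) fun _ ↦ rfl)
  let _ : Algebra A E := ((algebraMap F E).comp (algebraMap A F)).toAlgebra
  have : IsScalarTower A F E := .of_algebraMap_eq fun _ ↦ rfl
  let e : MvPolynomial σ K ≃ₐ[K] A[X] :=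
    (MvPolynomial.renameEquiv K (Equiv.optionSubtypeNe i).symm).trans
      (MvPolynomial.optionEquivLeft K _)
  have hroot : aeval (v i) (e φ) = 0 := by
    have hA : algebraMap A E = (MvPolynomial.aeval (fun j : {j // j ≠ i} ↦ v j) : A →ₐ[K] E) :=
      RingHom.ext fun p ↦ hv.aevalEquivField_algebraMap_apply_coe p
    rw [aeval_def, hA, ← h]
    refine (eval₂_aeval_optionEquivLeft _ _ _).trans ((MvPolynomial.aeval_rename ..).trans ?_)
    congr 2 with j
    by_cases hj : j = i
    · simp [hj]
    · simp [Equiv.optionSubtypeNe_symm_of_ne hj]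
  rw [MvPolynomial.degreeOf_eq_natDegree]
  exact natDegree_le_finrank_of_irreducible ((MulEquiv.irreducible_iff e).2 hφ) hroot

lemma degreeOf_one_le_max_natDegree {K : Type*} [Field K] {φ : MvPolynomial (Fin 2) K}
    (hφ : Irreducible φ) {f y : RatFunc K} (hf : ¬ ∃ c, f = RatFunc.C c)
    (h : MvPolynomial.aeval ![f, y] φ = 0) :
    φ.degreeOf 1 ≤ max f.num.natDegree f.denom.natDegree := by
  have hrange : Set.range (fun j : {j : Fin 2 // j ≠ 1} ↦ ![f, y] j) = {f} := by
    ext z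
    simp [eq_comm]
  have hindep : AlgebraicIndependent K fun j : {j : Fin 2 // j ≠ 1} ↦ ![f, y] j := by
    let _ : Unique {j : Fin 2 // j ≠ 1} := ⟨⟨⟨0, by simp⟩⟩, by decide⟩
    exact algebraicIndependent_unique_type_iff.2 (f.transcendental_of_ne_C hf)
  have hpos : 0 < Module.finrank K⟮f⟯ (RatFunc K) := by
    rw [f.finrank_eq_max_natDegree, Nat.pos_iff_ne_zero, ne_eq, Nat.max_eq_zero_iff, ← f.eq_C_iff]
    exact hf
  rw [← f.finrank_eq_max_natDegree]
  rw [← hrange] at hpos ⊢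
  have := Module.finite_of_finrank_pos hpos
  exact degreeOf_le_finrank hφ 1 hindep h

end DegreeBound

section RestrictionToAxis

variable {R : Type*} [CommRing R]

lemma coeff_aeval_zero_X (φ : MvPolynomial (Fin 2) R) (j : ℕ) :
    (MvPolynomial.aeval ![0, X] φ : R[X]).coeff j = φ.coeff (Finsupp.single 1 j) := by
  induction φ using MvPolynomial.induction_on' with
  | add p q hp hq => simp [hp, hq]
  | monomial d r =>
    have hd : d = Finsupp.single 1 j ↔ d 0 = 0 ∧ d 1 = j := by
      simp [Finsupp.ext_iff, Fin.forall_fin_two]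
    by_cases h0 : d 0 = 0 <;>
      simp [MvPolynomial.aeval_monomial, MvPolynomial.coeff_monomial, hd, h0,
        Finsupp.prod_fintype, coeff_X_pow, Polynomial.algebraMap_eq, eq_comm]

lemma X_zero_dvd_of_aeval_zero_X_eq_zero {φ : MvPolynomial (Fin 2) R}
    (h : (MvPolynomial.aeval ![0, X] φ : R[X]) = 0) : MvPolynomial.X 0 ∣ φ := by
  rw [MvPolynomial.as_sum φ]
  refine Finset.dvd_sum fun d hd ↦ MvPolynomial.X_dvd_monomial.2 (.inr fun hd0 ↦ ?_)
  have hd1 : d = Finsupp.single 1 (d 1) := by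
    ext i
    fin_cases i <;> simp [hd0]
  rw [MvPolynomial.mem_support_iff, hd1, ← coeff_aeval_zero_X, h] at hd
  simp at hd

lemma aeval_zero_X_ne_zero_of_irreducible [Nontrivial R] {A : Type*} [CommRing A] [Algebra R A]
    {φ : MvPolynomial (Fin 2) R} (hφ : Irreducible φ) {v : Fin 2 → A} (hv : v 0 ≠ 0)
    (h : MvPolynomial.aeval v φ = 0) : (MvPolynomial.aeval ![0, X] φ : R[X]) ≠ 0 := by
  intro h0
  obtain ⟨ψ, rfl⟩ := X_zero_dvd_of_aeval_zero_X_eq_zero h0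
  rcases hφ.isUnit_or_isUnit rfl with hX | hψ
  · simpa using hX.map MvPolynomial.constantCoeff
  · rw [map_mul, MvPolynomial.aeval_X, (hψ.map (MvPolynomial.aeval v)).mul_left_eq_zero] at h
    exact hv h

lemma natDegree_aeval_zero_X_le (φ : MvPolynomial (Fin 2) R) :
    (MvPolynomial.aeval ![0, X] φ : R[X]).natDegree ≤ φ.degreeOf 1 := by
  refine natDegree_le_iff_coeff_eq_zero.2 fun j hj ↦ ?_
  rw [coeff_aeval_zero_X]
  refine MvPolynomial.notMem_support_iff.1 fun hmem ↦ ?_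
  have hle := MvPolynomial.monomial_le_degreeOf 1 hmem
  rw [Finsupp.single_eq_same] at hle
  exact hle.not_gt hj

lemma eval_aeval_zero_X (φ : MvPolynomial (Fin 2) R) (y : R) :
    (MvPolynomial.aeval ![0, X] φ : R[X]).eval y = MvPolynomial.aeval ![0, y] φ := by
  rw [← coe_aeval_eq_eval, MvPolynomial.comp_aeval_apply]
  congr 2 with i
  fin_cases i <;> simp

end RestrictionToAxis

lemma eq_roots_of_subset_of_natDegree_le {R : Type*} [CommRing R] [IsDomain R] {p : R[X]}
    {s : Multiset R} (hp : p ≠ 0) (hs : s.Nodup) (hroot : ∀ x ∈ s, p.IsRoot x)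
    (hdeg : p.natDegree ≤ s.card) : p.roots = s ∧ p.natDegree = s.card := by
  have hle : s ≤ p.roots := (Multiset.le_iff_subset hs).2 fun x hx ↦ (mem_roots hp).2 (hroot x hx)
  have hcard := (card_roots' p).trans hdeg
  exact ⟨(Multiset.eq_of_le_of_card_le hle hcard).symm,
    hdeg.antisymm ((Multiset.card_le_card hle).trans (card_roots' p))⟩

section SimpleZeroFiber

variable {K : Type*} [Field K]

/-- The parameterization `(p₀ / q₀, p₁ / q₁)` sends the zeros of its first coordinate to distinct
points of the axis `x = 0`, all of them finite and different from the origin. The zeros are listed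
with multiplicity, so that `nodup` also makes `p₀` squarefree. -/
structure HasSimpleZeroFiber (p₀ q₀ p₁ q₁ : K[X]) : Prop where
  eval_q₀_ne_zero : ∀ t ∈ p₀.roots, q₀.eval t ≠ 0
  eval_p₁_ne_zero : ∀ t ∈ p₀.roots, p₁.eval t ≠ 0
  eval_q₁_ne_zero : ∀ t ∈ p₀.roots, q₁.eval t ≠ 0
  nodup : (p₀.roots.map fun t ↦ p₁.eval t / q₁.eval t).Nodup

lemma aeval_eval_div_eq_zero {p₀ q₀ p₁ q₁ : K[X]} {φ : MvPolynomial (Fin 2) K}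
    (h : MvPolynomial.aeval ![algebraMap K[X] (RatFunc K) p₀ / algebraMap K[X] (RatFunc K) q₀,
      algebraMap K[X] (RatFunc K) p₁ / algebraMap K[X] (RatFunc K) q₁] φ = 0) {t : K}
    (h₀ : q₀.eval t ≠ 0) (h₁ : q₁.eval t ≠ 0) :
    MvPolynomial.aeval ![p₀.eval t / q₀.eval t, p₁.eval t / q₁.eval t] φ = 0 := by
  have hq : ∀ i, aeval t (![q₀, q₁] i) ≠ 0 := by simp [Fin.forall_fin_two, h₀, h₁]
  have hv : ![algebraMap K[X] (RatFunc K) p₀ / algebraMap K[X] (RatFunc K) q₀,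
      algebraMap K[X] (RatFunc K) p₁ / algebraMap K[X] (RatFunc K) q₁] =
      fun i ↦ algebraMap K[X] (RatFunc K) (![p₀, p₁] i) /
        algebraMap K[X] (RatFunc K) (![q₀, q₁] i) := by
    ext i
    fin_cases i <;> rfl
  rw [hv] at h
  refine .trans (congrArg (MvPolynomial.aeval · φ) (funext fun i ↦ ?_))
    (aeval_div_eq_zero_of_specialization (aeval t) hq h)
  fin_cases i <;> simp

lemma not_exists_eq_C_div {p q : K[X]} {t : K} (hp : p ≠ 0) (hpt : p.IsRoot t)
    (hqt : q.eval t ≠ 0) :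
    ¬ ∃ c, algebraMap K[X] (RatFunc K) p / algebraMap K[X] (RatFunc K) q = RatFunc.C c := by
  rintro ⟨c, hc⟩
  have hq : algebraMap K[X] (RatFunc K) q ≠ 0 :=
    RatFunc.algebraMap_ne_zero fun h ↦ hqt (by simp [h])
  rw [div_eq_iff hq, ← RatFunc.algebraMap_C, ← map_mul] at hc
  obtain rfl := RatFunc.algebraMap_injective K hc
  have hc0 : c = 0 := by simpa [hqt] using hpt
  simp [hc0] at hp

lemma degreeOf_one_le_of_aeval_div_eq_zero {φ : MvPolynomial (Fin 2) K} (hφ : Irreducible φ)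
    {p q : K[X]} (hp : p ≠ 0) {t : K} (hpt : p.IsRoot t) (hqt : q.eval t ≠ 0) {y : RatFunc K}
    (h : MvPolynomial.aeval
      ![algebraMap K[X] (RatFunc K) p / algebraMap K[X] (RatFunc K) q, y] φ = 0) :
    φ.degreeOf 1 ≤ max p.natDegree q.natDegree := by
  have hq : q ≠ 0 := fun h ↦ hqt (by simp [h])
  exact (degreeOf_one_le_max_natDegree hφ (not_exists_eq_C_div hp hpt hqt) h).trans <|
    max_le_max (natDegree_le_of_dvd (RatFunc.num_div_dvd p hq) hp)
      (natDegree_le_of_dvd (RatFunc.denom_div_dvd p q) hq)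

namespace HasSimpleZeroFiber

variable [IsAlgClosed K] {p₀ q₀ p₁ q₁ : K[X]} {φ : MvPolynomial (Fin 2) K}

lemma roots_aeval_zero_X (h : HasSimpleZeroFiber p₀ q₀ p₁ q₁)
    (hp₀ : p₀.natDegree ≠ 0) (hq₀ : q₀.natDegree ≤ p₀.natDegree) (hφ : Irreducible φ)
    (hv : MvPolynomial.aeval ![algebraMap K[X] (RatFunc K) p₀ / algebraMap K[X] (RatFunc K) q₀,
      algebraMap K[X] (RatFunc K) p₁ / algebraMap K[X] (RatFunc K) q₁] φ = 0) :
    (MvPolynomial.aeval ![0, X] φ : K[X]).roots =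
        p₀.roots.map (fun t ↦ p₁.eval t / q₁.eval t) ∧
      (MvPolynomial.aeval ![0, X] φ : K[X]).natDegree = p₀.natDegree ∧
      φ.degreeOf 1 = p₀.natDegree := by
  have hp₀0 : p₀ ≠ 0 := fun h0 ↦ hp₀ (by simp [h0])
  have hroot {t} (ht : t ∈ p₀.roots) : p₀.IsRoot t := isRoot_of_mem_roots ht
  obtain ⟨t, ht⟩ : ∃ t, t ∈ p₀.roots :=
    (IsAlgClosed.exists_root p₀ (degree_ne_of_natDegree_ne hp₀)).imp fun t ↦ (mem_roots hp₀0).2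
  have hq₀0 : q₀ ≠ 0 := fun h0 ↦ h.eval_q₀_ne_zero t ht (by simp [h0])
  have hle : φ.degreeOf 1 ≤ p₀.natDegree :=
    (degreeOf_one_le_of_aeval_div_eq_zero hφ hp₀0 (hroot ht) (h.eval_q₀_ne_zero t ht) hv).trans_eq
      (max_eq_left hq₀)
  have hψ : (MvPolynomial.aeval ![0, X] φ : K[X]) ≠ 0 :=
    aeval_zero_X_ne_zero_of_irreducible hφ
      (div_ne_zero (RatFunc.algebraMap_ne_zero hp₀0) (RatFunc.algebraMap_ne_zero hq₀0)) hv
  have hcard : (p₀.roots.map fun t ↦ p₁.eval t / q₁.eval t).card = p₀.natDegree := by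
    rw [Multiset.card_map, splits_iff_card_roots.1 (IsAlgClosed.splits p₀)]
  obtain ⟨hroots, hdeg⟩ := eq_roots_of_subset_of_natDegree_le hψ h.nodup
    (Multiset.forall_mem_map_iff.2 fun t ht ↦ by
      simpa [eval_aeval_zero_X, (hroot ht).eq_zero] using
        aeval_eval_div_eq_zero hv (h.eval_q₀_ne_zero t ht) (h.eval_q₁_ne_zero t ht))
    (((natDegree_aeval_zero_X_le φ).trans hle).trans_eq hcard.symm)
  rw [hcard] at hdeg
  exact ⟨hroots, hdeg, hle.antisymm (hdeg.ge.trans (natDegree_aeval_zero_X_le φ))⟩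

lemma zero_mem_support (h : HasSimpleZeroFiber p₀ q₀ p₁ q₁)
    (hp₀ : p₀.natDegree ≠ 0) (hq₀ : q₀.natDegree ≤ p₀.natDegree) (hφ : Irreducible φ)
    (hv : MvPolynomial.aeval ![algebraMap K[X] (RatFunc K) p₀ / algebraMap K[X] (RatFunc K) q₀,
      algebraMap K[X] (RatFunc K) p₁ / algebraMap K[X] (RatFunc K) q₁] φ = 0) :
    0 ∈ φ.support := by
  obtain ⟨hroots, hdeg, -⟩ := h.roots_aeval_zero_X hp₀ hq₀ hφ hv
  have hψ : (MvPolynomial.aeval ![0, X] φ : K[X]) ≠ 0 := fun h0 ↦ hp₀ (by simp [← hdeg, h0])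
  rw [MvPolynomial.mem_support_iff, ← Finsupp.single_zero 1, ← coeff_aeval_zero_X,
    coeff_zero_eq_eval_zero]
  intro h0
  have hmem := (mem_roots hψ).2 h0
  rw [hroots] at hmem
  obtain ⟨t, ht, hval⟩ := Multiset.mem_map.1 hmem
  exact div_ne_zero (h.eval_p₁_ne_zero t ht) (h.eval_q₁_ne_zero t ht) hval

lemma single_one_natDegree_mem_support (h : HasSimpleZeroFiber p₀ q₀ p₁ q₁)
    (hp₀ : p₀.natDegree ≠ 0) (hq₀ : q₀.natDegree ≤ p₀.natDegree) (hφ : Irreducible φ)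
    (hv : MvPolynomial.aeval ![algebraMap K[X] (RatFunc K) p₀ / algebraMap K[X] (RatFunc K) q₀,
      algebraMap K[X] (RatFunc K) p₁ / algebraMap K[X] (RatFunc K) q₁] φ = 0) :
    Finsupp.single 1 p₀.natDegree ∈ φ.support := by
  obtain ⟨-, hdeg, -⟩ := h.roots_aeval_zero_X hp₀ hq₀ hφ hv
  rw [MvPolynomial.mem_support_iff, ← coeff_aeval_zero_X, ← hdeg]
  exact leadingCoeff_ne_zero.2 fun h0 ↦ hp₀ (by simp [← hdeg, h0])

end HasSimpleZeroFiber

end SimpleZeroFiber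

section Genericity

lemma nodup_roots_iff_eval_derivative_ne_zero {R : Type*} [CommRing R] [IsDomain R] {p : R[X]}
    (hp : p ≠ 0) : p.roots.Nodup ↔ ∀ t ∈ p.roots, (derivative p).eval t ≠ 0 := by
  classical
  simp only [Multiset.nodup_iff_count_le_one, count_roots, ← not_lt,
    one_lt_rootMultiplicity_iff_isRoot hp, not_and, mem_roots hp, IsRoot.def, ne_eq]

lemma resultant_ne_zero_iff_eval_ne_zero {R : Type*} [CommRing R] [IsDomain R] {p q : R[X]}
    (hp : p ≠ 0) (hs : p.Splits) {n : ℕ} (hq : q.natDegree ≤ n) :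
    resultant p q p.natDegree n ≠ 0 ↔ ∀ t ∈ p.roots, q.eval t ≠ 0 := by
  simp [resultant_eq_prod_eval p q n hq hs, hp]

variable {A : Type*} [CommRing A]

/-- The resultant `Res_t(p₀(t), Y q₁(t) - p₁(t))`, a polynomial in `Y` whose roots are the values of
`p₁ / q₁` at the zeros of `p₀`. The numbers `a` and `b` are the formal degrees at which the
resultant is taken, so that it commutes with ring homomorphisms. -/
noncomputable def valueEliminant (p₀ p₁ q₁ : A[X]) (a b : ℕ) : A[X] :=
  resultant (p₀.map C) (C X * q₁.map C - p₁.map C) a b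

/-- The condition `HasSimpleZeroFiber` on `p₀, q₀, p₁, q₁` of formal degrees `a, a, b, b`, as the
nonvanishing of a polynomial in their coefficients. Its last factor is, up to a leading coefficient,
the discriminant of the eliminant. -/
noncomputable def zeroFiberDiscriminant (p₀ q₀ p₁ q₁ : A[X]) (a b : ℕ) : A :=
  p₀.coeff a * resultant p₀ q₀ a a * resultant p₀ p₁ a b * resultant p₀ q₁ a b *
    resultant (valueEliminant p₀ p₁ q₁ a b) (derivative (valueEliminant p₀ p₁ q₁ a b)) a (a - 1)

lemma valueEliminant_map {B : Type*} [CommRing B] (f : A →+* B) (p₀ p₁ q₁ : A[X]) (a b : ℕ) :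
    valueEliminant (p₀.map f) (p₁.map f) (q₁.map f) a b = (valueEliminant p₀ p₁ q₁ a b).map f := by
  have hC (p : A[X]) : (p.map f).map C = (p.map C).map (mapRingHom f) := by
    simp only [Polynomial.map_map, mapRingHom_comp_C]
  have hY : C X * (q₁.map f).map C - (p₁.map f).map C =
      (C X * q₁.map C - p₁.map C).map (mapRingHom f) := by
    simp [hC]
  rw [valueEliminant, hC, hY, resultant_map_map, coe_mapRingHom, valueEliminant]

lemma zeroFiberDiscriminant_map {B : Type*} [CommRing B] (f : A →+* B) (p₀ q₀ p₁ q₁ : A[X])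
    (a b : ℕ) : zeroFiberDiscriminant (p₀.map f) (q₀.map f) (p₁.map f) (q₁.map f) a b =
      f (zeroFiberDiscriminant p₀ q₀ p₁ q₁ a b) := by
  rw [zeroFiberDiscriminant, valueEliminant_map, derivative_map]
  simp only [zeroFiberDiscriminant, resultant_map_map, coeff_map, map_mul]

variable {K : Type*} [Field K] {p₀ q₀ p₁ q₁ : K[X]} {b : ℕ}

lemma valueEliminant_eq_C_mul_prod (hs : p₀.Splits) (hp₁ : p₁.natDegree ≤ b)
    (hq₁ : q₁.natDegree ≤ b) (hne : ∀ t ∈ p₀.roots, q₁.eval t ≠ 0) :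
    valueEliminant p₀ p₁ q₁ p₀.natDegree b =
      C (p₀.leadingCoeff ^ b * (p₀.roots.map fun t ↦ q₁.eval t).prod) *
        ((p₀.roots.map fun t ↦ p₁.eval t / q₁.eval t).map fun y ↦ X - C y).prod := by
  have hdeg : (C X * q₁.map C - p₁.map C : K[X][X]).natDegree ≤ b :=
    (natDegree_sub_le _ _).trans <| max_le
      ((natDegree_C_mul_le _ _).trans (natDegree_map_le.trans hq₁)) (natDegree_map_le.trans hp₁)
  rw [valueEliminant, ← natDegree_map_eq_of_injective C_injective p₀,
    resultant_eq_prod_eval _ _ b hdeg (hs.map C), leadingCoeff_map_of_injective C_injective,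
    hs.roots_map_of_injective C_injective, C_mul, C_pow, mul_assoc, map_multiset_prod]
  simp only [Multiset.map_map, ← Multiset.prod_map_mul]
  congr 2
  refine Multiset.map_congr rfl fun t ht ↦ ?_
  simp only [Function.comp_apply, eval_sub, eval_mul, eval_C, eval_map_apply, mul_sub, ← C_mul,
    mul_div_cancel₀ _ (hne t ht), mul_comm X]

lemma valueEliminant_roots_natDegree (hp₀ : p₀ ≠ 0) (hs : p₀.Splits) (hp₁ : p₁.natDegree ≤ b)
    (hq₁ : q₁.natDegree ≤ b) (hne : ∀ t ∈ p₀.roots, q₁.eval t ≠ 0) :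
    valueEliminant p₀ p₁ q₁ p₀.natDegree b ≠ 0 ∧
      (valueEliminant p₀ p₁ q₁ p₀.natDegree b).roots =
        p₀.roots.map (fun t ↦ p₁.eval t / q₁.eval t) ∧
      (valueEliminant p₀ p₁ q₁ p₀.natDegree b).natDegree = p₀.natDegree := by
  have hc : p₀.leadingCoeff ^ b * (p₀.roots.map fun t ↦ q₁.eval t).prod ≠ 0 := by
    simpa [hp₀] using hne
  rw [valueEliminant_eq_C_mul_prod hs hp₁ hq₁ hne, roots_C_mul _ hc, natDegree_C_mul hc,
    roots_multiset_prod_X_sub_C, natDegree_multiset_prod_X_sub_C_eq_card, Multiset.card_map,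
    splits_iff_card_roots.1 hs]
  exact ⟨mul_ne_zero (C_ne_zero.2 hc) (monic_multisetProd_X_sub_C _).ne_zero, rfl, rfl⟩

lemma zeroFiberDiscriminant_ne_zero_iff [IsAlgClosed K] {a : ℕ} (hp₀ : p₀.natDegree ≤ a)
    (hq₀ : q₀.natDegree ≤ a) (hp₁ : p₁.natDegree ≤ b) (hq₁ : q₁.natDegree ≤ b) :
    zeroFiberDiscriminant p₀ q₀ p₁ q₁ a b ≠ 0 ↔
      p₀.coeff a ≠ 0 ∧ HasSimpleZeroFiber p₀ q₀ p₁ q₁ := by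
  by_cases hc : p₀.coeff a = 0
  · simp [zeroFiberDiscriminant, hc]
  have hp₀0 : p₀ ≠ 0 := fun h ↦ hc (by simp [h])
  obtain rfl := hp₀.antisymm (le_natDegree_of_ne_zero hc)
  have hs := IsAlgClosed.splits p₀
  simp only [zeroFiberDiscriminant, mul_ne_zero_iff, resultant_ne_zero_iff_eval_ne_zero hp₀0 hs,
    hq₀, hp₁, hq₁, and_assoc]
  have hdisc (hne : ∀ t ∈ p₀.roots, q₁.eval t ≠ 0) :
      resultant (valueEliminant p₀ p₁ q₁ p₀.natDegree b)
          (derivative (valueEliminant p₀ p₁ q₁ p₀.natDegree b)) p₀.natDegree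
          (p₀.natDegree - 1) ≠ 0 ↔
        (p₀.roots.map fun t ↦ p₁.eval t / q₁.eval t).Nodup := by
    obtain ⟨h0, hroots, hdeg⟩ := valueEliminant_roots_natDegree hp₀0 hs hp₁ hq₁ hne
    rw [← hroots, nodup_roots_iff_eval_derivative_ne_zero h0,
      ← resultant_ne_zero_iff_eval_ne_zero h0 (IsAlgClosed.splits _) (natDegree_derivative_le _),
      hdeg]
  exact and_congr_right fun _ ↦
    ⟨fun ⟨h₀, h₁, h₂, h₃⟩ ↦ ⟨h₀, h₁, h₂, (hdisc h₂).1 h₃⟩,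
      fun ⟨h₀, h₁, h₂, h₃⟩ ↦ ⟨h₀, h₁, h₂, (hdisc h₂).2 h₃⟩⟩

end Genericity

section SparsePoly

variable {ι R : Type*} [CommSemiring R]

/-- The `i`-th polynomial of the family with supports `SS` and coefficient vector `c`. Over `ℂ` it
unfolds to `polyOfCoeffs (SS i)`; with `c = MvPolynomial.X` it has indeterminate coefficients. -/
noncomputable def sparsePoly (SS : ι → Finset ℕ) (c : (Σ i, {s // s ∈ SS i}) → R) (i : ι) : R[X] :=
  ∑ s ∈ (SS i).attach, C (c ⟨i, s⟩) * X ^ (s : ℕ)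

variable {SS : ι → Finset ℕ}

lemma sparsePoly_map {S : Type*} [CommSemiring S] (f : R →+* S)
    (c : (Σ i, {s // s ∈ SS i}) → R) (i : ι) :
    (sparsePoly SS c i).map f = sparsePoly SS (f ∘ c) i := by
  simp [sparsePoly, Polynomial.map_sum]

lemma sparsePoly_X_map_eval (c : (Σ i, {s // s ∈ SS i}) → R) (i : ι) :
    (sparsePoly SS MvPolynomial.X i).map (MvPolynomial.eval c) = sparsePoly SS c i := by
  rw [sparsePoly_map]
  congr 1 with s
  simp

lemma eval_eval_sparsePoly_X (c : (Σ i, {s // s ∈ SS i}) → R) (i : ι) (t : R) :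
    MvPolynomial.eval c ((sparsePoly SS MvPolynomial.X i).eval (MvPolynomial.C t)) =
      (sparsePoly SS c i).eval t := by
  rw [← sparsePoly_X_map_eval c, ← eval_map_apply, MvPolynomial.eval_C]

lemma exists_sparsePoly_eq {p : ι → R[X]} (hp : ∀ i, (p i).support ⊆ SS i) :
    ∃ c, ∀ i, sparsePoly SS c i = p i := by
  refine ⟨fun s ↦ (p s.1).coeff s.2, fun i ↦ ?_⟩
  rw [(p i).as_sum_support_C_mul_X_pow, sparsePoly,
    Finset.sum_attach (SS i) fun s ↦ C ((p i).coeff s) * X ^ s]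
  refine (Finset.sum_subset (hp i) fun s _ hs ↦ ?_).symm
  rw [notMem_support_iff.1 hs, C_0, zero_mul]

lemma support_sparsePoly_subset (c : (Σ i, {s // s ∈ SS i}) → R) (i : ι) :
    (sparsePoly SS c i).support ⊆ SS i := by
  intro k hk
  contrapose! hk
  simp only [sparsePoly, notMem_support_iff, finsetSum_coeff, coeff_C_mul_X_pow]
  exact Finset.sum_eq_zero fun s _ ↦ if_neg fun h : k = s ↦ hk (h ▸ s.2)

lemma natDegree_sparsePoly_le (c : (Σ i, {s // s ∈ SS i}) → R) {i : ι} {a : ℕ}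
    (ha : ∀ s ∈ SS i, s ≤ a) : (sparsePoly SS c i).natDegree ≤ a :=
  natDegree_le_iff_coeff_eq_zero.2 fun k hk ↦ notMem_support_iff.1 fun hmem ↦
    (ha k (support_sparsePoly_subset c i hmem)).not_gt hk

end SparsePoly

section Existence

lemma exists_forall_eval_add_C_eq_zero {R : Type*} [CommRing R] [IsDomain R] [Infinite R]
    (E : R[X]) {D : R[X]} (hD : D ≠ 0) :
    ∃ c, ∀ t, (E + C c).eval t = 0 → D.eval t ≠ 0 := by
  classical
  obtain ⟨c, hc⟩ := Infinite.exists_notMem_finset (D.roots.toFinset.image fun t ↦ -E.eval t)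
  refine ⟨c, fun t ht hDt ↦ hc (Finset.mem_image.2 ⟨t, by simp [hD, hDt], ?_⟩)⟩
  rw [eval_add, eval_C] at ht
  exact neg_eq_of_add_eq_zero_right ht

lemma exists_add_C_roots_nodup {R : Type*} [CommRing R] [IsDomain R] [Infinite R] {E : R[X]}
    (hE : derivative E ≠ 0) {n : ℕ} (hn : n ≠ 0) :
    ∃ c, (E + C c).roots.Nodup ∧ (∀ t ∈ (E + C c).roots, t ≠ 0) ∧
      ∀ t ∈ (E + C c).roots, ∀ u, u * t ∈ (E + C c).roots → u ^ n = 1 →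
        E.comp (C u * X) = E := by
  classical
  let Z : Finset R := {u ∈ nthRootsFinset n (1 : R) | E.comp (C u * X) ≠ E}
  have hD : X * derivative E * ∏ u ∈ Z, (E.comp (C u * X) - E) ≠ 0 :=
    mul_ne_zero (mul_ne_zero X_ne_zero hE) <|
      Finset.prod_ne_zero_iff.2 fun u hu ↦ sub_ne_zero.2 (Finset.mem_filter.1 hu).2
  obtain ⟨c, hc⟩ := exists_forall_eval_add_C_eq_zero E hD
  have hne : E + C c ≠ 0 := fun h ↦ hE (by simpa using congrArg derivative h)
  have hroot {t} (ht : t ∈ (E + C c).roots) :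
      (t ≠ 0 ∧ (derivative E).eval t ≠ 0) ∧ ∀ u ∈ Z, E.eval (u * t) - E.eval t ≠ 0 := by
    simpa [eval_prod, Finset.prod_eq_zero_iff] using hc t (isRoot_of_mem_roots ht)
  refine ⟨c, (nodup_roots_iff_eval_derivative_ne_zero hne).2 fun t ht ↦ ?_,
    fun t ht ↦ (hroot ht).1.1, fun t ht u hut hu ↦ ?_⟩
  · simpa using (hroot ht).1.2
  · have hEt : (E + C c).eval t = (E + C c).eval (u * t) :=
      (isRoot_of_mem_roots ht).trans (isRoot_of_mem_roots hut).symm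
    by_contra hcomp
    refine (hroot ht).2 u (Finset.mem_filter.2 ⟨?_, hcomp⟩) ?_
    · rwa [mem_nthRootsFinset hn.bot_lt]
    · exact sub_eq_zero.2 (by simpa using hEt.symm)

lemma exists_support_subset_roots_nodup {K : Type*} [Field K] [CharZero K] {S : Finset ℕ}
    (h0 : 0 ∈ S) {a : ℕ} (ha : a ∈ S) (ha0 : a ≠ 0) {n : ℕ} (hn : n ≠ 0) :
    ∃ p : K[X], p.support ⊆ S ∧ p.coeff a ≠ 0 ∧ p.roots.Nodup ∧ (∀ t ∈ p.roots, t ≠ 0) ∧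
      ∀ t ∈ p.roots, ∀ u, u * t ∈ p.roots → u ^ n = 1 → ∀ k ∈ S, u ^ k = 1 := by
  let E : K[X] := ∑ k ∈ S, X ^ k
  have hcoeff (k : ℕ) : E.coeff k = if k ∈ S then 1 else 0 := by
    simp [E, finsetSum_coeff, coeff_X_pow]
  have hE : derivative E ≠ 0 := fun h ↦ ha0 <| Nat.le_zero.1 <|
    (le_natDegree_of_ne_zero (by simp [hcoeff, ha])).trans_eq
      (derivative_eq_zero.1 h)
  obtain ⟨c, hnodup, hne, hsep⟩ := exists_add_C_roots_nodup hE hn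
  refine ⟨E + C c, fun k hk ↦ ?_, by simp [hcoeff, ha, ha0, coeff_C], hnodup, hne,
    fun t ht u hut hu k hk ↦ ?_⟩
  · contrapose! hk
    have hk0 : k ≠ 0 := fun h ↦ hk (h ▸ h0)
    simp [hcoeff, hk, coeff_C, hk0]
  · simpa [hcoeff, hk] using congrArg (coeff · k) (hsep t ht u hut hu)

lemma eq_one_of_forall_pow_eq_one_of_gcd_eq_one {M : Type*} [Monoid M] {S : Finset ℕ}
    (hS : S.gcd id = 1) {u : M} (hu : ∀ k ∈ S, u ^ k = 1) : u = 1 :=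
  orderOf_eq_one_iff.1 <| Nat.dvd_one.1 <| hS ▸ Finset.dvd_gcd fun k hk ↦
    orderOf_dvd_of_pow_eq_one (hu k hk)

lemma pow_eq_one_of_forall_pow_eq_pow {M : Type*} [Monoid M] {S T : Finset ℕ}
    (hS : S.Nonempty) (hT : T.Nonempty) (h0 : 0 ∈ S ∪ T) {u : M}
    (h : ∀ k ∈ S, ∀ l ∈ T, u ^ k = u ^ l) : ∀ k ∈ S ∪ T, u ^ k = 1 := by
  obtain ⟨k₀, hk₀⟩ := hS
  obtain ⟨l₀, hl₀⟩ := hT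
  have hk₀l₀ : u ^ k₀ = 1 ∧ u ^ l₀ = 1 := by
    rcases Finset.mem_union.1 h0 with h0 | h0
    · have hl := h 0 h0 l₀ hl₀
      rw [pow_zero] at hl
      exact ⟨(h k₀ hk₀ l₀ hl₀).trans hl.symm, hl.symm⟩
    · have hk := h k₀ hk₀ 0 h0
      rw [pow_zero] at hk
      exact ⟨hk, (h k₀ hk₀ l₀ hl₀).symm.trans hk⟩
  intro k hk
  rcases Finset.mem_union.1 hk with hk | hk
  · exact (h k hk l₀ hl₀).trans hk₀l₀.2
  · exact (h k₀ hk₀ k hk).symm.trans hk₀l₀.1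

lemma exists_mvPolynomial_eval_ne_zero {R σ : Type*} [CommRing R] [IsDomain R] [Infinite R]
    {p : MvPolynomial σ R} (hp : p ≠ 0) : ∃ c, MvPolynomial.eval c p ≠ 0 := by
  contrapose! hp
  exact MvPolynomial.funext (by simpa using hp)

lemma exists_support_subset_injOn_div {K : Type*} [Field K] [Infinite K] {S T : Finset ℕ}
    (hS : S.Nonempty) (hT : T.Nonempty) {Z : Finset K} (hZ : ∀ t ∈ Z, t ≠ 0)
    (hsep : ∀ s ∈ Z, ∀ t ∈ Z, (∀ k ∈ S, ∀ l ∈ T, s ^ k * t ^ l = t ^ k * s ^ l) → s = t) :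
    ∃ p q : K[X], p.support ⊆ S ∧ q.support ⊆ T ∧ (∀ t ∈ Z, p.eval t ≠ 0) ∧
      (∀ t ∈ Z, q.eval t ≠ 0) ∧ Set.InjOn (fun t ↦ p.eval t / q.eval t) Z := by
  classical
  let F (i : Fin 2) (t : K) : MvPolynomial (Σ i, {s // s ∈ ![S, T] i}) K :=
    (sparsePoly ![S, T] MvPolynomial.X i).eval (MvPolynomial.C t)
  have monomials {k l : ℕ} (hk : k ∈ S) (hl : l ∈ T) :
      ∃ c, ∀ t, MvPolynomial.eval c (F 0 t) = t ^ k ∧ MvPolynomial.eval c (F 1 t) = t ^ l := by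
    obtain ⟨c, hc⟩ := exists_sparsePoly_eq (SS := ![S, T]) (p := ![X ^ k, (X ^ l : K[X])])
      (by simpa [Fin.forall_fin_two, support_X_pow] using ⟨hk, hl⟩)
    exact ⟨c, fun t ↦ by simp [F, eval_eval_sparsePoly_X, hc]⟩
  have hF : ∀ t ∈ Z, F 0 t * F 1 t ≠ 0 := fun t ht h ↦ by
    obtain ⟨k, hk⟩ := hS
    obtain ⟨l, hl⟩ := hT
    obtain ⟨c, hc⟩ := monomials hk hl
    simpa [hc, hZ t ht] using congrArg (MvPolynomial.eval c) h
  have hF' : ∀ st ∈ Z.offDiag, F 0 st.1 * F 1 st.2 - F 0 st.2 * F 1 st.1 ≠ 0 := by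
    rintro ⟨s, t⟩ hst h
    obtain ⟨hs, ht, hne⟩ := Finset.mem_offDiag.1 hst
    refine hne (hsep s hs t ht fun k hk l hl ↦ ?_)
    obtain ⟨c, hc⟩ := monomials hk hl
    simpa [hc, sub_eq_zero] using congrArg (MvPolynomial.eval c) h
  obtain ⟨c, hc⟩ := exists_mvPolynomial_eval_ne_zero
    (mul_ne_zero (Finset.prod_ne_zero_iff.2 hF) (Finset.prod_ne_zero_iff.2 hF'))
  simp only [map_mul, map_prod, map_sub, F, eval_eval_sparsePoly_X, mul_ne_zero_iff,
    Finset.prod_ne_zero_iff] at hc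
  refine ⟨_, _, support_sparsePoly_subset c 0, support_sparsePoly_subset c 1,
    fun t ht ↦ (hc.1 t ht).1, fun t ht ↦ (hc.1 t ht).2, fun s hs t ht hst ↦ ?_⟩
  by_contra hne
  refine hc.2 (s, t) (Finset.mem_offDiag.2 ⟨hs, ht, hne⟩) (sub_eq_zero.2 ?_)
  exact (div_eq_div_iff (hc.1 s hs).2 (hc.1 t ht).2).1 hst

lemma exists_hasSimpleZeroFiber {K : Type*} [Field K] [CharZero K] {S₀ S₁ S₂ S₃ : Finset ℕ}
    (hS₁ : S₁.Nonempty) (hS₂ : S₂.Nonempty) (hS₃ : S₃.Nonempty) (h0 : 0 ∈ S₀)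
    (h0' : 0 ∈ S₂ ∪ S₃) (hgcd : (S₀ ∪ (S₂ ∪ S₃)).gcd id = 1) (hn : ∃ n ∈ S₂ ∪ S₃, n ≠ 0)
    {a : ℕ} (ha : a ∈ S₀) (ha0 : a ≠ 0) :
    ∃ p₀ q₀ p₁ q₁ : K[X], p₀.support ⊆ S₀ ∧ q₀.support ⊆ S₁ ∧ p₁.support ⊆ S₂ ∧
      q₁.support ⊆ S₃ ∧ p₀.coeff a ≠ 0 ∧ HasSimpleZeroFiber p₀ q₀ p₁ q₁ := by
  classical
  obtain ⟨l, hl⟩ := hS₁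
  obtain ⟨n, hn, hn0⟩ := hn
  obtain ⟨p₀, hp₀, hcoeff, hnodup, hne, hratio⟩ :=
    exists_support_subset_roots_nodup (K := K) h0 ha ha0 hn0
  have hsep : ∀ s ∈ p₀.roots, ∀ t ∈ p₀.roots,
      (∀ k ∈ S₂, ∀ l ∈ S₃, s ^ k * t ^ l = t ^ k * s ^ l) → s = t := by
    intro s hs t ht hst
    have hs0 := hne s hs
    have hpow := pow_eq_one_of_forall_pow_eq_pow hS₂ hS₃ h0' (u := t / s) fun k hk l hl ↦ by
      rw [div_pow, div_pow, div_eq_div_iff (pow_ne_zero _ hs0) (pow_ne_zero _ hs0),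
        mul_comm (t ^ l), hst k hk l hl]
    have hpow₀ := hratio s hs (t / s) (by rwa [div_mul_cancel₀ t hs0]) (hpow n hn)
    exact ((div_eq_one_iff_eq hs0).1 <| eq_one_of_forall_pow_eq_one_of_gcd_eq_one hgcd <|
      Finset.forall_mem_union.2 ⟨hpow₀, hpow⟩).symm
  simp only [← Multiset.mem_toFinset (s := p₀.roots)] at hne hsep
  obtain ⟨p₁, q₁, hp₁, hq₁, hp₁0, hq₁0, hinj⟩ :=
    exists_support_subset_injOn_div hS₂ hS₃ hne hsep
  simp only [Multiset.mem_toFinset] at hne hp₁0 hq₁0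
  exact ⟨p₀, X ^ l, p₁, q₁, hp₀, by simpa [support_X_pow] using hl, hp₁, hq₁, hcoeff,
    fun t ht ↦ by simp [hne t ht], hp₁0, hq₁0,
    hnodup.map_on fun s hs t ht ↦ hinj (by simpa using hs) (by simpa using ht)⟩

end Existence

lemma exists_generic_hasSimpleZeroFiber {K : Type*} [Field K] [IsAlgClosed K] [CharZero K]
    {SS : Fin 4 → Finset ℕ} {a : ℕ} (hne : ∀ i, (SS i).Nonempty) (h0 : 0 ∈ SS 0)
    (h0' : 0 ∈ SS 2 ∪ SS 3) (hgcd : (SS 0 ∪ (SS 2 ∪ SS 3)).gcd id = 1)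
    (hn : ∃ n ∈ SS 2 ∪ SS 3, n ≠ 0) (ha : a ∈ SS 0) (hmax : ∀ s ∈ SS 0 ∪ SS 1, s ≤ a)
    (ha0 : a ≠ 0) :
    ∃ G : MvPolynomial (Σ i, {s // s ∈ SS i}) K, G ≠ 0 ∧ ∀ c, MvPolynomial.eval c G ≠ 0 →
      (sparsePoly SS c 0).natDegree = a ∧ HasSimpleZeroFiber (sparsePoly SS c 0)
        (sparsePoly SS c 1) (sparsePoly SS c 2) (sparsePoly SS c 3) := by
  let b := (SS 2 ∪ SS 3).sup id
  have hb : ∀ s ∈ SS 2 ∪ SS 3, s ≤ b := fun s hs ↦ Finset.le_sup (f := id) hs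
  rw [Finset.forall_mem_union] at hmax hb
  let U := sparsePoly SS (MvPolynomial.X (R := K))
  let G := zeroFiberDiscriminant (U 0) (U 1) (U 2) (U 3) a b
  have hG (c) : MvPolynomial.eval c G ≠ 0 ↔ (sparsePoly SS c 0).coeff a ≠ 0 ∧
      HasSimpleZeroFiber (sparsePoly SS c 0) (sparsePoly SS c 1) (sparsePoly SS c 2)
        (sparsePoly SS c 3) := by
    simp only [G, U, ← zeroFiberDiscriminant_map, sparsePoly_X_map_eval]
    exact zeroFiberDiscriminant_ne_zero_iff (natDegree_sparsePoly_le c hmax.1)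
      (natDegree_sparsePoly_le c hmax.2) (natDegree_sparsePoly_le c hb.1)
      (natDegree_sparsePoly_le c hb.2)
  refine ⟨G, fun hG0 ↦ ?_, fun c hc ↦ ?_⟩
  · obtain ⟨p₀, q₀, p₁, q₁, hp₀, hq₀, hp₁, hq₁, hgood⟩ := exists_hasSimpleZeroFiber (K := K)
      (hne 1) (hne 2) (hne 3) h0 h0' hgcd hn ha ha0
    obtain ⟨c, hc⟩ := exists_sparsePoly_eq (SS := SS) (p := ![p₀, q₀, p₁, q₁])
      (by simp [Fin.forall_fin_succ, hp₀, hq₀, hp₁, hq₁])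
    exact (hG c).2 (by simpa [hc] using hgood) (by rw [hG0, map_zero])
  · obtain ⟨hcoeff, hfiber⟩ := (hG c).1 hc
    exact ⟨(natDegree_sparsePoly_le c hmax.1).antisymm (le_natDegree_of_ne_zero hcoeff), hfiber⟩

end ImplicitHull

open ImplicitHull in
theorem implicit_lower_hull_special_general {K : Type*} [Field K] [IsAlgClosed K] [CharZero K]
    {SS : Fin 4 → Finset ℕ} {a : ℕ} (hne : ∀ i, (SS i).Nonempty) (h0 : 0 ∈ SS 0)
    (h0' : 0 ∈ SS 2 ∪ SS 3) (hgcd : (SS 0 ∪ (SS 2 ∪ SS 3)).gcd id = 1)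
    (hn : ∃ n ∈ SS 2 ∪ SS 3, n ≠ 0) (ha : a ∈ SS 0) (hmax : ∀ s ∈ SS 0 ∪ SS 1, s ≤ a)
    (ha0 : a ≠ 0) :
    ∃ G : MvPolynomial (Σ i, {s // s ∈ SS i}) K, G ≠ 0 ∧ ∀ c, MvPolynomial.eval c G ≠ 0 →
      ∀ φ : MvPolynomial (Fin 2) K, Irreducible φ → MvPolynomial.aeval
        ![algebraMap K[X] (RatFunc K) (sparsePoly SS c 0) /
            algebraMap K[X] (RatFunc K) (sparsePoly SS c 1),
          algebraMap K[X] (RatFunc K) (sparsePoly SS c 2) /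
            algebraMap K[X] (RatFunc K) (sparsePoly SS c 3)] φ = 0 →
        0 ∈ φ.support ∧ Finsupp.single 1 a ∈ φ.support ∧
          ((0 : ℝ), (0 : ℝ)) ∈ Set.extremePoints ℝ (supportHull φ) ∧
          ((0 : ℝ), (a : ℝ)) ∈ Set.extremePoints ℝ (supportHull φ) := by
  obtain ⟨G, hG0, hG⟩ :=
    exists_generic_hasSimpleZeroFiber (K := K) hne h0 h0' hgcd hn ha hmax ha0
  refine ⟨G, hG0, fun c hc φ hφ hv ↦ ?_⟩
  obtain ⟨rfl, hfiber⟩ := hG c hc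
  have hq := natDegree_sparsePoly_le c (Finset.forall_mem_union.1 hmax).2
  have hzero := hfiber.zero_mem_support ha0 hq hφ hv
  have htop := hfiber.single_one_natDegree_mem_support ha0 hq hφ hv
  have hdeg := (hfiber.roots_aeval_zero_X ha0 hq hφ hv).2.2
  refine ⟨hzero, htop, ?_, ?_⟩
  · simpa using mem_extremePoints_supportHull hzero (by simp)
  · simpa using mem_extremePoints_supportHull htop (by simp [Fin.forall_fin_two, hdeg])

/-- Lower hull, special case `SQ₀ ⊆ SP₀` (no point of `A₀` is selected under Selection2):
if also `SQ₁ ⊆ SP₁`, the origin is in the support and is a vertex of the Newton polygon;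
otherwise both `(0,0)` and `(0, a₀n)` are in the support and are vertices. -/
theorem implicit_lower_hull_special (SS : Fin 4 → Finset ℕ) (hne : ∀ i, (SS i).Nonempty)
    (h00 : 0 ∈ SS 0 ∪ SS 1) (h01 : 0 ∈ SS 2 ∪ SS 3)
    (hgcd : ((SS 0 ∪ SS 1 ∪ SS 2 ∪ SS 3).filter (fun s => s ≠ 0)).gcd id = 1)
    (a0n a1m : ℕ)
    (ha0nmem : a0n ∈ SS 0 ∪ SS 1) (ha0nmax : ∀ s ∈ SS 0 ∪ SS 1, s ≤ a0n)
    (ha1mmem : a1m ∈ SS 2 ∪ SS 3) (ha1mmax : ∀ s ∈ SS 2 ∪ SS 3, s ≤ a1m)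
    (ha0n1 : 1 ≤ a0n) (ha1m1 : 1 ≤ a1m)
    (hsub : SS 1 ⊆ SS 0) :
    ∃ G : MvPolynomial (Σ i : Fin 4, {s // s ∈ SS i}) ℂ, G ≠ 0 ∧
      ∀ c : (Σ i : Fin 4, {s // s ∈ SS i}) → ℂ, MvPolynomial.eval c G ≠ 0 →
        ∀ φ : MvPolynomial (Fin 2) ℂ, Irreducible φ → vanishesDiff SS c φ →
          (SS 3 ⊆ SS 2 →
            (0 : Fin 2 →₀ ℕ) ∈ φ.support ∧
            ((0 : ℝ), (0 : ℝ)) ∈ Set.extremePoints ℝ (newtonPolygon φ)) ∧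
          (¬ SS 3 ⊆ SS 2 →
            (0 : Fin 2 →₀ ℕ) ∈ φ.support ∧
            (Finsupp.single 1 a0n : Fin 2 →₀ ℕ) ∈ φ.support ∧
            ((0 : ℝ), (0 : ℝ)) ∈ Set.extremePoints ℝ (newtonPolygon φ) ∧
            ((0 : ℝ), (a0n : ℝ)) ∈ Set.extremePoints ℝ (newtonPolygon φ)) := by
  rw [Finset.union_eq_left.2 hsub] at h00 ha0nmem hgcd
  replace hgcd := (Finset.gcd_eq_gcd_filter_ne_zero (f := id)).trans hgcd
  rw [Finset.union_assoc] at hgcd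
  obtain ⟨G, hG0, hG⟩ := implicit_lower_hull_special_general (K := ℂ) hne h00 h01 hgcd
    ⟨a1m, ha1mmem, Nat.one_le_iff_ne_zero.1 ha1m1⟩ ha0nmem ha0nmax (Nat.one_le_iff_ne_zero.1 ha0n1)
  refine ⟨G, hG0, fun c hc φ hφ hv ↦ ?_⟩
  obtain ⟨hzero, htop, hvertex₀, hvertex⟩ := hG c hc φ hφ hv
  exact ⟨fun _ ↦ ⟨hzero, hvertex₀⟩, fun _ ↦ ⟨hzero, htop, hvertex₀, hvertex⟩⟩
end
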